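/- arXiv:2402.18156 — 14 statements merged into one kernel-verified Lean document; each statement's English description precedes it below -/
import Mathlib

section
/- Let n ≥ 2 and define f : Fin n → Fin n → ℝ by f i j = 1 if i ≠ j and f i j = 0 if i = j, and let g = −f. Then there exists a doubly stochastic matrix P : Fin n → Fin n → ℝ such that for every permutation σ of Fin n, ∑_{i,j,k,l} (f i j − g k l)² · P i k · P j l < ∑_{i,j} (f i j − g (σ i) (σ j))². (Hence the embedding of n-point gauged spaces into the space of spaces is not isometric.) -/
/-!
The uniform matrix `P i j = 1 / n` works. Put `S = ∑ i, ∑ j, f i j = n² - n`. Since `f` takes values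
in `{0, 1}` and `g = -f`, the summand is `(f i j + f k l)² = f i j + f k l + 2 (f i j) (f k l)`, so
averaging over `k, l` gives the cost `2 S + 2 S² / n²`. Because `f` is invariant under every
permutation, each `σ` costs `4 S`. The difference is `2 S (1 - S / n²) = 2 S / n > 0`.
-/

theorem gauged_embedding_not_isometric (n : ℕ) (hn : 2 ≤ n)
    (f g : Fin n → Fin n → ℝ)
    (hf : ∀ i j, f i j = if i ≠ j then 1 else 0)
    (hg : ∀ i j, g i j = - f i j) :
    ∃ P : Fin n → Fin n → ℝ,
      (∀ i j, 0 ≤ P i j) ∧ (∀ i, ∑ j, P i j = 1) ∧ (∀ j, ∑ i, P i j = 1) ∧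
      ∀ σ : Equiv.Perm (Fin n),
        ∑ i, ∑ j, ∑ k, ∑ l, (f i j - g k l) ^ 2 * P i k * P j l <
          ∑ i, ∑ j, (f i j - g (σ i) (σ j)) ^ 2 := by
  have hn2 : (2 : ℝ) ≤ n := by exact_mod_cast hn
  have hn0 : (n : ℝ) ≠ 0 := by positivity
  have hsq : ∀ i j, f i j ^ 2 = f i j := by
    intro i j
    rw [hf]
    split_ifs <;> norm_num
  have hS : ∑ i, ∑ j, f i j = (n : ℝ) ^ 2 - n := by
    have h : ∀ i j, f i j = 1 - if i = j then 1 else 0 := by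
      intro i j
      rw [hf]
      by_cases hij : i = j <;> simp [hij]
    simp only [h, Finset.sum_sub_distrib, Finset.sum_ite_eq, Finset.mem_univ, if_true,
      Finset.sum_const, Finset.card_univ, Fintype.card_fin, nsmul_eq_mul]
    ring
  refine ⟨fun _ _ => (n : ℝ)⁻¹, fun _ _ => by positivity, fun _ => by simp [hn0],
    fun _ => by simp [hn0], fun σ => ?_⟩
  have hL : ∑ i, ∑ j, ∑ k, ∑ l, (f i j - g k l) ^ 2 * (n : ℝ)⁻¹ * (n : ℝ)⁻¹
      = 2 * ((n : ℝ) ^ 2 - n) + 2 * ((n : ℝ) ^ 2 - n) ^ 2 * ((n : ℝ)⁻¹) ^ 2 := by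
    have h : ∀ i j k l, (f i j - g k l) ^ 2 * (n : ℝ)⁻¹ * (n : ℝ)⁻¹
        = f i j * (n : ℝ)⁻¹ ^ 2 + (2 * f i j + 1) * (n : ℝ)⁻¹ ^ 2 * f k l := by
      intro i j k l
      rw [hg]
      linear_combination (n : ℝ)⁻¹ ^ 2 * (hsq i j + hsq k l)
    simp only [h, Finset.sum_add_distrib, ← Finset.mul_sum, ← Finset.sum_mul, hS,
      Finset.sum_const, Finset.card_univ, Fintype.card_fin, nsmul_eq_mul]
    field_simp
    ring
  have hR : ∑ i, ∑ j, (f i j - g (σ i) (σ j)) ^ 2 = 4 * ((n : ℝ) ^ 2 - n) := by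
    have h : ∀ i j, (f i j - g (σ i) (σ j)) ^ 2 = 4 * f i j := by
      intro i j
      have hσ : f (σ i) (σ j) = f i j := by simp [hf]
      rw [hg, hσ]
      linear_combination 4 * hsq i j
    simp only [h, ← Finset.mul_sum, hS]
  rw [hL, hR]
  have e : 2 * ((n : ℝ) ^ 2 - n) ^ 2 * ((n : ℝ)⁻¹) ^ 2 = 2 * ((n : ℝ) - 1) ^ 2 := by
    field_simp
  rw [e]
  nlinarith
end

section
/- Let K be a nonempty compact convex subset of EuclideanSpace ℝ (Fin k), let f : EuclideanSpace ℝ (Fin k) → ℝ be convex on K, and let y ∈ K satisfy f z ≤ f y for all z ∈ K. Then there exists an extreme point x of K (x ∈ Set.extremePoints ℝ K) such that f x = f y. In particular the maximum of f over K equals the maximum of f over the extreme points of K. -/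
/-!
Among the directions along which one can move both ways from `y` inside `K` (a linear subspace
`twoSidedDirections`), pick a nonzero `v` if `y` is not extreme, and move from `y` along `v` until
leaving `K`, at `z`. Then `y` lies strictly between `z` and another point of `K`, so convexity and
the maximality of `f y` force `f z = f y`. The two-sided directions at `z` are among those at `y`,
and `v` is no longer one of them, so the dimension of this subspace drops. By induction on that
dimension an extreme point with the same value of `f` is reached. The argument uses no continuity
of `f`, whose set of maximisers need not be closed.
-/

open Filter Topology

/-- The directions `v` such that `y + t • v` stays in the convex set `K` for all small `t` of either
sign. It is the direction space of the smallest face of `K` containing `y`. -/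
def twoSidedDirections {E : Type*} [AddCommGroup E] [Module ℝ E] {K : Set E}
    (hK : Convex ℝ K) {y : E} (hy : y ∈ K) : Submodule ℝ E where
  carrier := {v | ∀ᶠ t : ℝ in 𝓝 0, y + t • v ∈ K}
  zero_mem' := by simp [hy]
  add_mem' := by
    intro u v hu hv
    have h2 : Tendsto (fun t : ℝ => 2 * t) (𝓝 0) (𝓝 0) := by
      simpa using (continuous_const_mul (2 : ℝ)).tendsto 0
    filter_upwards [h2.eventually hu, h2.eventually hv] with t h1 h2
    have := hK h1 h2 (a := 1 / 2) (b := 1 / 2) (by norm_num) (by norm_num) (by norm_num)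
    convert this using 1
    module
  smul_mem' := by
    intro c v hv
    have hc : Tendsto (fun t : ℝ => t * c) (𝓝 0) (𝓝 0) := by
      simpa using (continuous_mul_const c).tendsto 0
    filter_upwards [hc.eventually hv] with t h
    rwa [smul_smul]

theorem mem_twoSidedDirections {E : Type*} [AddCommGroup E] [Module ℝ E] {K : Set E}
    (hK : Convex ℝ K) {y : E} (hy : y ∈ K) {v : E} :
    v ∈ twoSidedDirections hK hy ↔ ∀ᶠ t : ℝ in 𝓝 0, y + t • v ∈ K := Iff.rfl

theorem exists_ne_zero_mem_twoSidedDirections {E : Type*} [AddCommGroup E] [Module ℝ E]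
    {K : Set E} (hK : Convex ℝ K) {y : E} (hy : y ∈ K) (hext : y ∉ K.extremePoints ℝ) :
    ∃ v ∈ twoSidedDirections hK hy, v ≠ 0 := by
  rw [mem_extremePoints_iff_left] at hext
  push Not at hext
  obtain ⟨p, hp, q, hq, ⟨a, b, ha, hb, hab, rfl⟩, hne⟩ := hext hy
  refine ⟨p - q, ?_, fun h => hne ?_⟩
  · rw [mem_twoSidedDirections]
    filter_upwards [Ioo_mem_nhds (neg_lt_zero.2 ha) hb] with t ht
    have := hK hp hq (a := a + t) (b := b - t) (by linarith [ht.1]) (by linarith [ht.2])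
      (by linarith)
    convert this using 1
    module
  · rw [← sub_eq_zero.1 h, ← add_smul, hab, one_smul]

/-- Two-sided directions can only be lost when passing from a point `y` of an open segment in `K` to
an endpoint `z` of it. -/
theorem twoSidedDirections_le_of_mem_openSegment {E : Type*} [AddCommGroup E] [Module ℝ E]
    {K : Set E} (hK : Convex ℝ K) {y z w : E} (hy : y ∈ K) (hz : z ∈ K) (hw : w ∈ K)
    (h : y ∈ openSegment ℝ z w) : twoSidedDirections hK hz ≤ twoSidedDirections hK hy := by
  obtain ⟨a, b, ha, hb, hab, rfl⟩ := h
  intro u hu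
  rw [mem_twoSidedDirections] at hu ⊢
  have hc : Tendsto (fun t : ℝ => t / a) (𝓝 0) (𝓝 0) := by
    simpa using (continuous_id.div_const a).tendsto 0
  filter_upwards [hc.eventually hu] with t ht
  have := hK ht hw ha.le hb.le hab
  convert this using 1
  rw [smul_add, smul_smul, mul_div_cancel₀ _ ha.ne']
  module

/-- A line through a point of a compact set has a last point in that set. -/
theorem exists_isGreatest_line {E : Type*} [NormedAddCommGroup E] [NormedSpace ℝ E]
    {K : Set E} (hK : IsCompact K) {y v : E} (hy : y ∈ K) (hv : v ≠ 0) :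
    ∃ t : ℝ, IsGreatest {t : ℝ | y + t • v ∈ K} t := by
  have hemb : IsClosedEmbedding fun t : ℝ => y + t • v :=
    (Homeomorph.addLeft y).isClosedEmbedding.comp (isClosedEmbedding_smul_left hv)
  exact (hemb.isCompact_preimage hK).exists_isGreatest ⟨0, by simpa using hy⟩

theorem convex_max_attained_extreme_point (k : ℕ)
    (K : Set (EuclideanSpace ℝ (Fin k)))
    (hKcomp : IsCompact K) (hKconv : Convex ℝ K) (hKne : K.Nonempty)
    (f : EuclideanSpace ℝ (Fin k) → ℝ) (hf : ConvexOn ℝ K f)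
    (y : EuclideanSpace ℝ (Fin k)) (hy : y ∈ K) (hmax : ∀ z ∈ K, f z ≤ f y) :
    ∃ x ∈ Set.extremePoints ℝ K, f x = f y := by
  induction hn : Module.finrank ℝ (twoSidedDirections hKconv hy) using Nat.strong_induction_on
    generalizing y with
  | _ n ih =>
    by_cases hext : y ∈ K.extremePoints ℝ
    · exact ⟨y, hext, rfl⟩
    obtain ⟨v, hv, hv0⟩ := exists_ne_zero_mem_twoSidedDirections hKconv hy hext
    obtain ⟨s, hs, hs_max⟩ := exists_isGreatest_line hKcomp hy hv0
    obtain ⟨ε, hε, hball⟩ := Metric.eventually_nhds_iff.1 ((mem_twoSidedDirections _ _).1 hv)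
    have hhalf : |ε / 2| < ε := by rw [abs_of_pos (by positivity)]; linarith
    have hpos : y + (ε / 2) • v ∈ K := hball (by rwa [Real.dist_eq, sub_zero])
    have hw : y + (-(ε / 2)) • v ∈ K := hball (by rwa [Real.dist_eq, sub_zero, abs_neg])
    have hs0 : 0 < s := lt_of_lt_of_le (by positivity) (hs_max hpos)
    have hz : y + s • v ∈ K := hs
    have hseg : y ∈ openSegment ℝ (y + s • v) (y + (-(ε / 2)) • v) := by
      have hd : s + ε / 2 ≠ 0 := by positivity
      refine ⟨(ε / 2) / (s + ε / 2), s / (s + ε / 2), by positivity, by positivity,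
        by field_simp; ring, ?_⟩
      match_scalars
      · field_simp
        ring
      · field_simp
        ring
    have hfz : f (y + s • v) = f y := by
      refine le_antisymm (hmax _ hz) ?_
      obtain ⟨a, b, ha, hb, hab, hyab⟩ := hseg
      have hconv := hf.2 hz hw ha.le hb.le hab
      rw [hyab, smul_eq_mul, smul_eq_mul] at hconv
      have hfw := mul_le_mul_of_nonneg_left (hmax _ hw) hb.le
      have hb' : b = 1 - a := by linarith
      rw [hb'] at hconv hfw
      exact le_of_mul_le_mul_left (by linarith) ha
    have hvz : v ∉ twoSidedDirections hKconv hz := by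
      intro h
      obtain ⟨δ, hδ, hball'⟩ := Metric.eventually_nhds_iff.1 ((mem_twoSidedDirections _ _).1 h)
      have hmem : y + s • v + (δ / 2) • v ∈ K := hball' (by
        rw [Real.dist_eq, sub_zero, abs_of_pos (by positivity)]; linarith)
      rw [add_assoc, ← add_smul] at hmem
      linarith [hs_max hmem]
    have hlt : twoSidedDirections hKconv hz < twoSidedDirections hKconv hy :=
      SetLike.lt_iff_le_and_exists.2
        ⟨twoSidedDirections_le_of_mem_openSegment hKconv hy hz hw hseg, v, hv, hvz⟩
    obtain ⟨x, hx, hfx⟩ := ih _ (hn ▸ Submodule.finrank_lt_finrank_of_lt hlt) _ hz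
      (fun p hp => hfz ▸ hmax p hp) rfl
    exact ⟨x, hx, hfx.trans hfz⟩
end

section
/- Let A : Fin n → Fin n → ℝ and B : Fin m → Fin m → ℝ be symmetric matrices, and let V ⊆ (Fin n → ℝ) and W ⊆ (Fin m → ℝ) be linear subspaces. Suppose A is conditionally negative semi-definite with respect to V (for all v ∈ V, ∑_{i,j} v i · v j · A i j ≤ 0) and B is conditionally negative semi-definite with respect to W (for all w ∈ W, ∑_{k,l} w k · w l · B k l ≤ 0). Then the Kronecker product A ⊗ B, viewed as the matrix on index set Fin n × Fin m with entries (A ⊗ B) (i,k) (j,l) = A i j · B k l, is conditionally positive semi-definite with respect to the tensor product subspace: for every x : Fin n × Fin m → ℝ lying in the linear span of {u | ∃ v ∈ V, ∃ w ∈ W, ∀ i k, u (i,k) = v i · w k}, one has ∑_{(i,k),(j,l)} x (i,k) · x (j,l) · A i j · B k l ≥ 0. -/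
/-! A subspace of `Fin n → ℝ` is the image of a linear projection `P`, and `A` is conditionally
negative semi-definite on it only if `-(Pᵀ A P)` is positive semi-definite
(`exists_proj_neg_posSemidef`). With projections `P`, `Q` for `V`, `W`, the two signs cancel in
`(-(Pᵀ A P)) ⊗ (-(Qᵀ B Q)) = (P ⊗ Q)ᵀ (A ⊗ B) (P ⊗ Q)`, and this is positive semi-definite because
Kronecker products preserve positive semi-definiteness. Finally `P ⊗ Q` fixes every pure tensor of
`V` and `W`, hence their span, so on that span the quadratic forms of `A ⊗ B` and of
`(P ⊗ Q)ᵀ (A ⊗ B) (P ⊗ Q)` agree. -/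

open scoped Kronecker Matrix in
/-- `P` is the matrix of a linear projection onto `V`. -/
lemma exists_proj_neg_posSemidef {n : ℕ} (A : Matrix (Fin n) (Fin n) ℝ)
    (hA_symm : ∀ i j, A i j = A j i) (V : Submodule ℝ (Fin n → ℝ))
    (hA : ∀ v ∈ V, ∑ i, ∑ j, v i * v j * A i j ≤ 0) :
    ∃ P : Matrix (Fin n) (Fin n) ℝ,
      (∀ v ∈ V, P *ᵥ v = v) ∧ (-(Pᵀ * A * P)).PosSemidef := by
  obtain ⟨g, hg⟩ := V.subtype.exists_leftInverse_of_injective V.ker_subtype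
  have hP (v) : LinearMap.toMatrix' (V.subtype ∘ₗ g) *ᵥ v = g v := by
    rw [LinearMap.toMatrix'_mulVec]; rfl
  refine ⟨LinearMap.toMatrix' (V.subtype ∘ₗ g), fun v hv => ?_, ?_⟩
  · rw [hP]
    exact congrArg Subtype.val (LinearMap.congr_fun hg ⟨v, hv⟩)
  · have hAt : Aᵀ = A := by ext i j; exact hA_symm j i
    refine .of_dotProduct_mulVec_nonneg ?_ fun x => ?_
    · simp [Matrix.IsHermitian, Matrix.conjTranspose_eq_transpose_of_trivial,
        Matrix.transpose_mul, hAt, Matrix.mul_assoc]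
    · have h := hA _ (g x).2
      rw [star_trivial, Matrix.neg_mulVec, dotProduct_neg, ← Matrix.mulVec_mulVec,
        ← Matrix.mulVec_mulVec, Matrix.dotProduct_mulVec, Matrix.vecMul_transpose, hP]
      simp only [dotProduct, Matrix.mulVec, Finset.mul_sum]
      rw [neg_nonneg]
      refine le_of_eq_of_le ?_ h
      exact Finset.sum_congr rfl fun i _ => Finset.sum_congr rfl fun j _ => by ring

open scoped Kronecker Matrix in
theorem kronecker_cond_neg_semidef_tensor (n m : ℕ)
    (A : Fin n → Fin n → ℝ) (B : Fin m → Fin m → ℝ)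
    (hA_symm : ∀ i j, A i j = A j i) (hB_symm : ∀ k l, B k l = B l k)
    (V : Submodule ℝ (Fin n → ℝ)) (W : Submodule ℝ (Fin m → ℝ))
    (hA : ∀ v ∈ V, ∑ i, ∑ j, v i * v j * A i j ≤ 0)
    (hB : ∀ w ∈ W, ∑ k, ∑ l, w k * w l * B k l ≤ 0)
    (x : Fin n × Fin m → ℝ)
    (hx : x ∈ Submodule.span ℝ
      {u : Fin n × Fin m → ℝ | ∃ v ∈ V, ∃ w ∈ W, ∀ i k, u (i, k) = v i * w k}) :
    0 ≤ ∑ p : Fin n × Fin m, ∑ q : Fin n × Fin m,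
      x p * x q * (A p.1 q.1 * B p.2 q.2) := by
  obtain ⟨P, hPV, hP⟩ := exists_proj_neg_posSemidef (Matrix.of A) hA_symm V hA
  obtain ⟨Q, hQW, hQ⟩ := exists_proj_neg_posSemidef (Matrix.of B) hB_symm W hB
  have hfix : (P ⊗ₖ Q) *ᵥ x = x := by
    induction hx using Submodule.span_induction with
    | mem u hu =>
      obtain ⟨v, hv, w, hw, h⟩ := hu
      ext ⟨i, k⟩
      rw [h, ← congrFun (hPV v hv) i, ← congrFun (hQW w hw) k]
      simp only [Matrix.mulVec, dotProduct, Fintype.sum_prod_type, Finset.sum_mul_sum, h,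
        Matrix.kroneckerMap_apply]
      exact Finset.sum_congr rfl fun i _ => Finset.sum_congr rfl fun j _ => by ring
    | zero => exact Matrix.mulVec_zero _
    | add u v _ _ hu hv => rw [Matrix.mulVec_add, hu, hv]
    | smul c u _ hu => rw [Matrix.mulVec_smul, hu]
  have hK : (-(Pᵀ * Matrix.of A * P)) ⊗ₖ (-(Qᵀ * Matrix.of B * Q))
      = (P ⊗ₖ Q)ᵀ * (Matrix.of A ⊗ₖ Matrix.of B) * (P ⊗ₖ Q) := by
    rw [← Matrix.kroneckerMap_transpose, ← Matrix.mul_kronecker_mul, ← Matrix.mul_kronecker_mul]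
    ext p q
    simp only [Matrix.kroneckerMap_apply, Matrix.neg_apply, neg_mul_neg]
  have h := (hP.kronecker hQ).dotProduct_mulVec_nonneg x
  rw [hK, star_trivial, ← Matrix.mulVec_mulVec, ← Matrix.mulVec_mulVec, Matrix.dotProduct_mulVec,
    Matrix.vecMul_transpose, hfix] at h
  refine h.trans_eq ?_
  simp only [dotProduct, Matrix.mulVec, Finset.mul_sum]
  exact Finset.sum_congr rfl fun p _ => Finset.sum_congr rfl fun q _ => by
    simp only [Matrix.kroneckerMap_apply, Matrix.of_apply]; ring
end

section
/- Let n ≥ 1. The set S = {X : Matrix (Fin n) (Fin n) ℝ | all row sums of X are zero and all column sums of X are zero} is a linear subspace of dimension (n−1)², and it equals the linear span over ℝ of the set of differences {P − Q | P and Q are doubly stochastic n × n matrices}. -/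
/-!
For the dimension, a matrix with vanishing row and column sums is determined by the block obtained
by deleting the first row and column, and that block is arbitrary: the deleted entries are
recovered as negated row and column sums. So deleting them is a linear isomorphism onto the
`(n - 1) × (n - 1)` matrices.

For the span, differences of doubly stochastic matrices clearly have vanishing row and column sums.
Conversely, the uniform matrix `J`, with entries `1 / n`, has strictly positive entries, so given
`X` with vanishing row and column sums, `J + t X` is doubly stochastic for small `t > 0`, and
`X = t⁻¹ ((J + t X) - J)`.
-/

/-- The space of square matrices all of whose row sums and column sums vanish. -/
def zeroSums (n : ℕ) : Submodule ℝ (Matrix (Fin n) (Fin n) ℝ) where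
  carrier := {X | (∀ i, ∑ j, X i j = 0) ∧ (∀ j, ∑ i, X i j = 0)}
  zero_mem' := by simp
  add_mem' := by
    rintro X Y ⟨h1, h2⟩ ⟨h3, h4⟩
    simp_all [Finset.sum_add_distrib]
  smul_mem' := by
    rintro c X ⟨h1, h2⟩
    simp_all [← Finset.mul_sum]

theorem mem_zeroSums {n : ℕ} {X : Matrix (Fin n) (Fin n) ℝ} :
    X ∈ zeroSums n ↔ (∀ i, ∑ j, X i j = 0) ∧ (∀ j, ∑ i, X i j = 0) := Iff.rfl

/-- The linear map deleting the first row and the first column. -/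
def deleteFirst (m : ℕ) : zeroSums (m + 1) →ₗ[ℝ] Matrix (Fin m) (Fin m) ℝ where
  toFun X := fun i j => X.1 i.succ j.succ
  map_add' _ _ := rfl
  map_smul' _ _ := rfl

theorem deleteFirst_injective (m : ℕ) : Function.Injective (deleteFirst m) := by
  rw [injective_iff_map_eq_zero]
  rintro ⟨X, hX⟩ h
  obtain ⟨hr, hc⟩ := mem_zeroSums.1 hX
  have h0 : ∀ i j : Fin m, X i.succ j.succ = 0 := fun i j => congrFun (congrFun h i) j
  have h1 : ∀ (i : Fin m) (j : Fin (m + 1)), X i.succ j = 0 := by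
    intro i j
    refine Fin.cases ?_ (h0 i) j
    simpa [Fin.sum_univ_succ, h0] using hr i.succ
  have h2 : ∀ i j : Fin (m + 1), X i j = 0 := by
    intro i j
    refine Fin.cases ?_ (fun i => h1 i j) i
    simpa [Fin.sum_univ_succ, h1] using hc j
  exact Subtype.ext (Matrix.ext h2)

theorem deleteFirst_surjective (m : ℕ) : Function.Surjective (deleteFirst m) := by
  intro Y
  let R : Fin m → Fin (m + 1) → ℝ := fun i => Fin.cons (-∑ j, Y i j) (Y i)
  let X : Fin (m + 1) → Fin (m + 1) → ℝ := Fin.cons (fun j => -∑ i, R i j) R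
  have hR : ∀ i, ∑ j, R i j = 0 := fun i => by simp [R, Fin.sum_univ_succ]
  refine ⟨⟨X, mem_zeroSums.2 ⟨?_, ?_⟩⟩, ?_⟩
  · refine Fin.cases ?_ ?_
    · -- The first row sums to minus the total of the other rows, each of which sums to zero.
      simp only [X, Fin.cons_zero, Finset.sum_neg_distrib]
      rw [Finset.sum_comm]
      simp [hR]
    · intro i
      simpa [X] using hR i
  · intro j
    simp [X, Fin.sum_univ_succ]
  · rfl

theorem finrank_zeroSums (m : ℕ) : Module.finrank ℝ (zeroSums (m + 1)) = m ^ 2 := by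
  rw [(LinearEquiv.ofBijective (deleteFirst m)
    ⟨deleteFirst_injective m, deleteFirst_surjective m⟩).finrank_eq, Module.finrank_matrix]
  simp [sq]

theorem span_bistochastic_differences (n : ℕ) (hn : 1 ≤ n) :
    ∃ S : Submodule ℝ (Matrix (Fin n) (Fin n) ℝ),
      (S : Set (Matrix (Fin n) (Fin n) ℝ)) =
        {X | (∀ i, ∑ j, X i j = 0) ∧ (∀ j, ∑ i, X i j = 0)} ∧
      Module.finrank ℝ S = (n - 1) ^ 2 ∧
      S = Submodule.span ℝ
        {X : Matrix (Fin n) (Fin n) ℝ | ∃ P Q : Matrix (Fin n) (Fin n) ℝ,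
          (∀ i j, 0 ≤ P i j) ∧ (∀ i, ∑ j, P i j = 1) ∧ (∀ j, ∑ i, P i j = 1) ∧
          (∀ i j, 0 ≤ Q i j) ∧ (∀ i, ∑ j, Q i j = 1) ∧ (∀ j, ∑ i, Q i j = 1) ∧
          X = P - Q} := by
  refine ⟨zeroSums n, rfl, ?_, le_antisymm ?_ (Submodule.span_le.2 ?_)⟩
  · obtain ⟨m, rfl⟩ := Nat.exists_eq_add_of_le' hn
    exact finrank_zeroSums m
  · intro X hX
    obtain ⟨hr, hc⟩ := mem_zeroSums.1 hX
    have hn0 : (0 : ℝ) < n := by exact_mod_cast hn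
    -- Adding `1` keeps this bound on the entries of `X` positive even when `X = 0`.
    let c : ℝ := 1 + ∑ i, ∑ j, |X i j|
    have hc0 : 0 < c := by positivity
    have hcX : ∀ i j, |X i j| ≤ c := by
      intro i j
      have h1 : |X i j| ≤ ∑ j, |X i j| :=
        Finset.single_le_sum (f := fun j => |X i j|) (fun _ _ => abs_nonneg _) (Finset.mem_univ j)
      have h2 : ∑ j, |X i j| ≤ ∑ i, ∑ j, |X i j| :=
        Finset.single_le_sum (f := fun i => ∑ j, |X i j|)
          (fun _ _ => Finset.sum_nonneg fun _ _ => abs_nonneg _) (Finset.mem_univ i)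
      simp only [c]
      linarith
    obtain ⟨J, hJ⟩ : ∃ J : Matrix (Fin n) (Fin n) ℝ, ∀ i j, J i j = (n : ℝ)⁻¹ :=
      ⟨fun _ _ => (n : ℝ)⁻¹, fun _ _ => rfl⟩
    let t : ℝ := (n : ℝ)⁻¹ * c⁻¹
    have ht : 0 < t := by positivity
    have hXt : X = t⁻¹ • ((J + t • X) - J) := by
      rw [add_sub_cancel_left, smul_smul, inv_mul_cancel₀ ht.ne', one_smul]
    rw [hXt]
    refine Submodule.smul_mem _ _ (Submodule.subset_span ⟨J + t • X, J, ?_, ?_, ?_, ?_, ?_, ?_, rfl⟩)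
    · intro i j
      have h1 : t * (-c) ≤ t * X i j :=
        mul_le_mul_of_nonneg_left (neg_le_of_abs_le (hcX i j)) ht.le
      have h2 : t * (-c) = -(n : ℝ)⁻¹ := by
        simp only [t]
        field_simp
      simp only [Matrix.add_apply, Matrix.smul_apply, smul_eq_mul, hJ]
      linarith
    · intro i
      simp [hJ, Finset.sum_add_distrib, ← Finset.mul_sum, hr, hn0.ne']
    · intro j
      simp [hJ, Finset.sum_add_distrib, ← Finset.mul_sum, hc, hn0.ne']
    · intro i j
      simp [hJ]
    · intro i
      simp [hJ, hn0.ne']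
    · intro j
      simp [hJ, hn0.ne']
  · rintro _ ⟨P, Q, -, hP1, hP2, -, hQ1, hQ2, rfl⟩
    exact ⟨fun i => by simp [hP1, hQ1], fun j => by simp [hP2, hQ2]⟩
end

section
/- Let n ≥ 1 and let Dˣ, Dʸ : Fin n → Fin n → ℝ be symmetric matrices with zero diagonal which are of negative type. Then for every doubly stochastic matrix P : Fin n → Fin n → ℝ there exists a permutation σ of Fin n such that ∑_{i,j,k,l} Dˣ i j · Dʸ k l · P i k · P j l ≤ ∑_{i,j} Dˣ i j · Dʸ (σ i) (σ j). (Hence the maximum of the quadratic objective h(P) = ∑ Dˣ_{ij} Dʸ_{kl} p_{ik} p_{jl} over doubly stochastic matrices equals its maximum over permutation matrices.) -/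
/-!
The function `h(P) = ∑ DX i j * DY k l * P i k * P j l` is convex on the doubly stochastic
matrices, so by Birkhoff's theorem and the maximum principle for convex functions its maximum is
attained at a permutation matrix.

Convexity amounts to `0 ≤ h(Q)` whenever all row and column sums of `Q` vanish, since differences
of doubly stochastic matrices are of this kind. By Schoenberg's argument a matrix of negative type
can be written `DX i j = a i + c j - ∑ m, b m i * b m j` (`exists_gram_of_negative_type`). The
terms `a i` and `c j` contribute nothing to `h(Q)` because the column sums of `Q` vanish, and
each `b m` contributes minus the quadratic form of `DY` at the vector `k ↦ ∑ i, b m i * Q i k`,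
which has sum zero because the row sums of `Q` vanish (`energy_nonneg`).
-/

/-- Schoenberg's argument: relative to a base point `o`, a matrix of negative type differs from
a sum of a row function and a column function by minus a Gram matrix. -/
lemma exists_gram_of_negative_type {n : ℕ} (D : Fin n → Fin n → ℝ) (o : Fin n)
    (hsymm : ∀ i j, D i j = D j i) (hdiag : ∀ i, D i i = 0)
    (hneg : ∀ v : Fin n → ℝ, ∑ i, v i = 0 → ∑ i, ∑ j, v i * v j * D i j ≤ 0) :
    ∃ (r : ℕ) (b : Fin r → Fin n → ℝ),
      ∀ i j, D i j = D i o + D o j - ∑ m, b m i * b m j := by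
  let K : Matrix (Fin n) (Fin n) ℝ := Matrix.of fun i j => D i o + D o j - D i j
  have hK : K.PosSemidef := by
    refine .of_dotProduct_mulVec_nonneg ?_ fun x => ?_
    · ext i j
      simp only [K, Matrix.conjTranspose_apply, Matrix.of_apply, star_trivial]
      rw [hsymm j o, hsymm o i, hsymm j i]
      ring
    -- Subtracting the total mass of `x` at `o` gives a sum-zero vector to which `hneg` applies.
    · have h := hneg (fun i => x i - (∑ j, x j) * if i = o then 1 else 0) (by simp)
      have e : ∑ i, ∑ j, (x i - (∑ j, x j) * if i = o then 1 else 0) *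
          (x j - (∑ j, x j) * if j = o then 1 else 0) * D i j =
          -(star x ⬝ᵥ (K.mulVec x)) := by
        set S := ∑ j, x j with hS
        have hl : ∑ i, ∑ j, (x i - S * if i = o then 1 else 0) *
            (x j - S * if j = o then 1 else 0) * D i j =
            ∑ i, ∑ j, x i * x j * D i j - S * ∑ i, x i * D i o - S * ∑ j, x j * D o j := by
          have hin (i) : ∑ j, (x i - S * if i = o then 1 else 0) *
              (x j - S * if j = o then 1 else 0) * D i j =
              (x i - S * if i = o then 1 else 0) * (∑ j, x j * D i j - S * D i o) := by
            simp [mul_assoc, sub_mul, ← Finset.mul_sum]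
          simp only [hin]
          simp [sub_mul, mul_sub, hdiag, Finset.mul_sum, mul_assoc, mul_left_comm]
          ring
        have hr : star x ⬝ᵥ (K.mulVec x) =
            S * ∑ i, x i * D i o + S * ∑ j, x j * D o j - ∑ i, ∑ j, x i * x j * D i j := by
          have h1 : S * ∑ i, x i * D i o = ∑ i, ∑ j, x i * D i o * x j := by
            rw [mul_comm, hS, Finset.sum_mul_sum]
          have h2 : S * ∑ j, x j * D o j = ∑ i, ∑ j, x i * (x j * D o j) := by
            rw [hS, Finset.sum_mul_sum]
          rw [h1, h2]
          simp only [dotProduct, Matrix.mulVec, K, Matrix.of_apply, Pi.star_apply, star_trivial,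
            Finset.mul_sum, ← Finset.sum_add_distrib, ← Finset.sum_sub_distrib]
          refine Finset.sum_congr rfl fun i _ => Finset.sum_congr rfl fun j _ => ?_
          ring
        rw [hl, hr]
        ring
      rw [e] at h
      linarith
  obtain ⟨r, b, hb⟩ := Matrix.posSemidef_iff_eq_sum_vecMulVec.mp hK
  refine ⟨r, b, fun i j => ?_⟩
  have h := congrFun (congrFun hb i) j
  simp only [K, Matrix.of_apply, Matrix.sum_apply, Matrix.vecMulVec_apply,
    star_trivial] at h
  linarith

/-- The quadratic objective is nonnegative on matrices with vanishing row and column sums. -/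
lemma energy_nonneg {n : ℕ} (o : Fin n) (DX DY : Fin n → Fin n → ℝ)
    (hDX_symm : ∀ i j, DX i j = DX j i) (hDX_diag : ∀ i, DX i i = 0)
    (hDX_neg : ∀ v : Fin n → ℝ, ∑ i, v i = 0 → ∑ i, ∑ j, v i * v j * DX i j ≤ 0)
    (hDY_neg : ∀ v : Fin n → ℝ, ∑ i, v i = 0 → ∑ i, ∑ j, v i * v j * DY i j ≤ 0)
    (Q : Fin n → Fin n → ℝ) (hrow : ∀ i, ∑ j, Q i j = 0) (hcol : ∀ j, ∑ i, Q i j = 0) :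
    0 ≤ ∑ i, ∑ j, ∑ k, ∑ l, DX i j * DY k l * Q i k * Q j l := by
  obtain ⟨r, b, hb⟩ := exists_gram_of_negative_type DX o hDX_symm hDX_diag hDX_neg
  let G : Fin n → Fin n → ℝ := fun i j => ∑ k, ∑ l, DY k l * Q i k * Q j l
  have hG1 (j) : ∑ i, G i j = 0 := by
    rw [Finset.sum_comm]
    refine Finset.sum_eq_zero fun k _ => ?_
    rw [Finset.sum_comm]
    refine Finset.sum_eq_zero fun l _ => ?_
    rw [← Finset.sum_mul, ← Finset.mul_sum, hcol]
    simp
  have hG2 (i) : ∑ j, G i j = 0 := by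
    rw [Finset.sum_comm]
    refine Finset.sum_eq_zero fun k _ => ?_
    rw [Finset.sum_comm]
    refine Finset.sum_eq_zero fun l _ => ?_
    rw [← Finset.mul_sum, hcol, mul_zero]
  have e1 : ∑ i, ∑ j, ∑ k, ∑ l, DX i j * DY k l * Q i k * Q j l = ∑ i, ∑ j, DX i j * G i j := by
    simp only [G, Finset.mul_sum, mul_assoc]
  have e2 : ∑ i, ∑ j, DX i j * G i j =
      ∑ i, ∑ j, DX i o * G i j + ∑ i, ∑ j, DX o j * G i j
        - ∑ i, ∑ j, ∑ m, b m i * b m j * G i j := by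
    simp only [← Finset.sum_add_distrib, ← Finset.sum_sub_distrib]
    refine Finset.sum_congr rfl fun i _ => Finset.sum_congr rfl fun j _ => ?_
    rw [← Finset.sum_mul]
    conv_lhs => rw [hb i j]
    ring
  have e3 : ∑ i, ∑ j, DX i o * G i j = 0 := by
    simp only [← Finset.mul_sum, hG2, mul_zero, Finset.sum_const_zero]
  have e4 : ∑ i, ∑ j, DX o j * G i j = 0 := by
    rw [Finset.sum_comm]
    simp only [← Finset.mul_sum, hG1, mul_zero, Finset.sum_const_zero]
  have e5 : ∑ i, ∑ j, ∑ m, b m i * b m j * G i j =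
      ∑ m, ∑ k, ∑ l, (∑ i, b m i * Q i k) * (∑ j, b m j * Q j l) * DY k l := by
    simp only [G, Finset.mul_sum]
    rw [← Fintype.sum_prod_type', Finset.sum_comm]
    refine Finset.sum_congr rfl fun m _ => ?_
    rw [Finset.sum_comm]
    refine Finset.sum_congr rfl fun k _ => ?_
    rw [Finset.sum_comm]
    refine Finset.sum_congr rfl fun l _ => ?_
    rw [Fintype.sum_prod_type, ← Finset.mul_sum, Finset.sum_mul_sum]
    simp only [Finset.sum_mul]
    refine Finset.sum_congr rfl fun i _ => Finset.sum_congr rfl fun j _ => ?_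
    ring
  have e6 : ∑ m, ∑ k, ∑ l, (∑ i, b m i * Q i k) * (∑ j, b m j * Q j l) * DY k l ≤ 0 := by
    refine Finset.sum_nonpos fun m _ => hDY_neg (fun k => ∑ i, b m i * Q i k) ?_
    rw [Finset.sum_comm]
    simp only [← Finset.mul_sum, hrow, mul_zero, Finset.sum_const_zero]
  rw [e1, e2, e3, e4, e5]
  linarith

theorem negative_type_quadratic_max_on_permutations (n : ℕ) (hn : 1 ≤ n)
    (DX DY : Fin n → Fin n → ℝ)
    (hDX_symm : ∀ i j, DX i j = DX j i) (hDX_diag : ∀ i, DX i i = 0)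
    (hDY_symm : ∀ i j, DY i j = DY j i) (hDY_diag : ∀ i, DY i i = 0)
    (hDX_neg : ∀ v : Fin n → ℝ, ∑ i, v i = 0 → ∑ i, ∑ j, v i * v j * DX i j ≤ 0)
    (hDY_neg : ∀ v : Fin n → ℝ, ∑ i, v i = 0 → ∑ i, ∑ j, v i * v j * DY i j ≤ 0)
    (P : Fin n → Fin n → ℝ)
    (hP_nonneg : ∀ i j, 0 ≤ P i j)
    (hP_row : ∀ i, ∑ j, P i j = 1) (hP_col : ∀ j, ∑ i, P i j = 1) :
    ∃ σ : Equiv.Perm (Fin n),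
      ∑ i, ∑ j, ∑ k, ∑ l, DX i j * DY k l * P i k * P j l ≤
        ∑ i, ∑ j, DX i j * DY (σ i) (σ j) := by
  let h : Matrix (Fin n) (Fin n) ℝ → ℝ :=
    fun M => ∑ i, ∑ j, ∑ k, ∑ l, DX i j * DY k l * M i k * M j l
  have hconv : ConvexOn ℝ (doublyStochastic ℝ (Fin n) : Set (Matrix (Fin n) (Fin n) ℝ)) h := by
    refine ⟨convex_doublyStochastic, fun M hM N hN s t hs ht hst => ?_⟩
    have hQ : 0 ≤ h (M - N) :=
      energy_nonneg ⟨0, hn⟩ DX DY hDX_symm hDX_diag hDX_neg hDY_neg (M - N)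
        (fun i => by
          simp [sum_row_of_mem_doublyStochastic hM, sum_row_of_mem_doublyStochastic hN])
        (fun j => by
          simp [sum_col_of_mem_doublyStochastic hM, sum_col_of_mem_doublyStochastic hN])
    have e : h (s • M + t • N) = s • h M + t • h N - s * t * h (M - N) := by
      obtain rfl : t = 1 - s := by linarith
      simp only [h, smul_eq_mul, Finset.mul_sum, ← Finset.sum_add_distrib,
        ← Finset.sum_sub_distrib]
      refine Finset.sum_congr rfl fun i _ => Finset.sum_congr rfl fun j _ =>
        Finset.sum_congr rfl fun k _ => Finset.sum_congr rfl fun l _ => ?_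
      simp only [Matrix.add_apply, Matrix.smul_apply, Matrix.sub_apply, smul_eq_mul]
      ring
    rw [e]
    linarith [mul_nonneg (mul_nonneg hs ht) hQ]
  have hP : Matrix.of P ∈ convexHull ℝ {σ.permMatrix ℝ | σ : Equiv.Perm (Fin n)} := by
    rw [← doublyStochastic_eq_convexHull_permMatrix]
    exact mem_doublyStochastic_iff_sum.mpr ⟨hP_nonneg, hP_row, hP_col⟩
  obtain ⟨_, ⟨σ, rfl⟩, hσ⟩ := hconv.exists_ge_of_mem_convexHull
    (by rintro _ ⟨σ, rfl⟩; exact permMatrix_mem_doublyStochastic) hP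
  refine ⟨σ, hσ.trans_eq ?_⟩
  simp [h, Equiv.Perm.permMatrix]
end

section
/- Let n ≥ 1 and let f, g : Fin n → Fin n → ℝ be distance matrices which are of negative type. Then for every doubly stochastic matrix P : Fin n → Fin n → ℝ there exists a permutation σ of Fin n such that ∑_{i,j} (f i j − g (σ i) (σ j))² ≤ ∑_{i,j,k,l} (f i j − g k l)² · P i k · P j l. (Hence the L²-distortion distance computed with transport plans equals the quotient distance computed with permutations, i.e. the embedding Φ of n-point metric spaces of negative type into the space of spaces is isometric.) -/
/-!
Write `E(P) = ∑ (f i j - g k l)² P i k P j l`, a quadratic form in `P`. For `Q` with vanishing row and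
column sums, the terms of `(f i j - g k l)²` depending on `f` or `g` alone drop out, so
`E(Q) = -2 ∑ f i j g k l Q i k Q j l`. This is nonpositive: by negative type, `f` equals minus a Gram
matrix `F = Aᵀ A` up to terms depending on only one index (Schoenberg), hence
`∑ f i j g k l Q i k Q j l = -∑ₘ ∑ g k l (A Q) m k (A Q) m l`, and the rows of `A Q` sum to zero, so
that the negative type of `g` applies (`cross_nonneg`). Thus `E` is concave along differences of
doubly stochastic matrices. By Birkhoff's theorem `P` is a convex combination of permutation
matrices, so `E` at one of them is at most `E(P)` (`exists_dotProduct_mulVec_le`).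
-/

open Matrix
open scoped MatrixOrder Matrix.Norms.L2Operator

/-- Minimum principle: a quadratic form that is nonpositive on all differences `X s - P`, where `P`
is a convex combination of the points `X s`, is at most its value at `P` at some `X s`. -/
lemma exists_dotProduct_mulVec_le {α S : Type*} [Fintype α] [Fintype S]
    (K : Matrix α α ℝ) (w : S → ℝ) (hw : ∀ s, 0 ≤ w s) (hw1 : ∑ s, w s = 1)
    (X : S → α → ℝ) (P : α → ℝ) (hP : P = ∑ s, w s • X s)
    (hK : ∀ s, (X s - P) ⬝ᵥ K *ᵥ (X s - P) ≤ 0) :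
    ∃ s, X s ⬝ᵥ K *ᵥ X s ≤ P ⬝ᵥ K *ᵥ P := by
  by_contra! hlt
  have h (v : α → ℝ) : ∑ s, w s * (X s ⬝ᵥ v) = P ⬝ᵥ v := by
    rw [hP]
    simp [sum_dotProduct, smul_dotProduct]
  have h1 := h (K *ᵥ P)
  have h2 : ∑ s, w s * (P ⬝ᵥ K *ᵥ X s) = P ⬝ᵥ K *ᵥ P := by
    simpa only [dotProduct_mulVec, dotProduct_comm] using h (P ᵥ* K)
  have h3 : ∑ s, w s * ((X s - P) ⬝ᵥ K *ᵥ (X s - P))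
      = ∑ s, w s * (X s ⬝ᵥ K *ᵥ X s - P ⬝ᵥ K *ᵥ P) := by
    simp only [mulVec_sub, dotProduct_sub, sub_dotProduct, mul_sub, Finset.sum_sub_distrib, h1, h2,
      ← Finset.sum_mul, hw1]
    ring
  have h4 : ∑ s, w s * ((X s - P) ⬝ᵥ K *ᵥ (X s - P)) ≤ 0 :=
    Finset.sum_nonpos fun s _ => mul_nonpos_of_nonneg_of_nonpos (hw s) (hK s)
  obtain ⟨s, hs⟩ : ∃ s, 0 < w s := by
    by_contra! h
    have := Finset.sum_nonpos fun s (_ : s ∈ Finset.univ) => h s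
    linarith
  have h5 : 0 < ∑ s, w s * (X s ⬝ᵥ K *ᵥ X s - P ⬝ᵥ K *ᵥ P) :=
    Finset.sum_pos' (fun s _ => mul_nonneg (hw s) (sub_nonneg.2 (hlt s).le))
      ⟨s, Finset.mem_univ s, mul_pos hs (sub_pos.2 (hlt s))⟩
  linarith

/-- Schoenberg's construction: with base point `o`, a matrix of negative type yields the positive
semidefinite kernel `f i o + f o j - f i j`, written here as a Gram matrix. -/
lemma exists_gram {n : ℕ} (o : Fin n) (f : Fin n → Fin n → ℝ)
    (hf_symm : ∀ i j, f i j = f j i) (hf_diag : ∀ i, f i i = 0)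
    (hf_neg : ∀ v : Fin n → ℝ, ∑ i, v i = 0 → ∑ i, ∑ j, v i * v j * f i j ≤ 0) :
    ∃ A : Matrix (Fin n) (Fin n) ℝ, ∀ i j, f i j = f i o + f o j - ∑ m, A m i * A m j := by
  have hpsd : (Matrix.of fun i j => f i o + f o j - f i j).PosSemidef := by
    refine PosSemidef.of_dotProduct_mulVec_nonneg ?_ fun u => ?_
    · ext i j
      simp [hf_symm i j, hf_symm i o, hf_symm j o, add_comm]
    · -- Moving the total mass of `u` to the base point produces a vector of zero sum.
      have h := hf_neg (fun i => u i - if i = o then ∑ k, u k else 0) (by simp)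
      have e : ∑ i, ∑ j, (u i - if i = o then ∑ k, u k else 0) *
          (u j - if j = o then ∑ k, u k else 0) * f i j
          = ∑ i, ∑ j, u i * u j * f i j - (∑ k, u k) * (∑ i, u i * f i o)
            - (∑ k, u k) * (∑ j, u j * f o j) := by
        generalize ∑ k, u k = S
        simp only [sub_mul, mul_sub, Finset.sum_sub_distrib, mul_ite, ite_mul, mul_zero, zero_mul,
          Finset.sum_ite_eq', Finset.mem_univ, if_true, Finset.sum_ite_irrel,
          Finset.sum_const_zero, hf_diag, sub_zero, Finset.mul_sum]
        simp only [mul_left_comm, mul_comm]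
        ring
      rw [e] at h
      have e2 : star u ⬝ᵥ (Matrix.of fun i j => f i o + f o j - f i j) *ᵥ u
          = (∑ k, u k) * (∑ i, u i * f i o) + (∑ k, u k) * (∑ j, u j * f o j)
            - ∑ i, ∑ j, u i * u j * f i j := by
        rw [mul_comm (∑ k, u k) (∑ i, u i * f i o)]
        simp only [dotProduct, mulVec, star_trivial, of_apply]
        rw [Finset.sum_mul_sum, Finset.sum_mul_sum]
        simp only [Finset.mul_sum, ← Finset.sum_add_distrib, ← Finset.sum_sub_distrib]
        refine Finset.sum_congr rfl fun i _ => Finset.sum_congr rfl fun j _ => ?_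
        ring
      rw [e2]
      linarith
  obtain ⟨A, hA⟩ := CStarAlgebra.nonneg_iff_eq_star_mul_self.mp hpsd.nonneg
  refine ⟨A, fun i j => ?_⟩
  have := congrFun (congrFun hA i) j
  simp only [of_apply, mul_apply, star_apply, star_trivial] at this
  linarith

/-- The cross term is nonnegative on matrices with vanishing row and column sums. -/
lemma cross_nonneg {n : ℕ} (o : Fin n) (f g : Fin n → Fin n → ℝ)
    (hf_symm : ∀ i j, f i j = f j i) (hf_diag : ∀ i, f i i = 0)
    (hf_neg : ∀ v : Fin n → ℝ, ∑ i, v i = 0 → ∑ i, ∑ j, v i * v j * f i j ≤ 0)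
    (hg_neg : ∀ v : Fin n → ℝ, ∑ i, v i = 0 → ∑ i, ∑ j, v i * v j * g i j ≤ 0)
    (Q : Fin n → Fin n → ℝ)
    (hrow : ∀ i, ∑ k, Q i k = 0) (hcol : ∀ k, ∑ i, Q i k = 0) :
    0 ≤ ∑ k, ∑ l, g k l * ∑ i, ∑ j, f i j * (Q i k * Q j l) := by
  obtain ⟨A, hA⟩ := exists_gram o f hf_symm hf_diag hf_neg
  have key (k l : Fin n) : ∑ i, ∑ j, f i j * (Q i k * Q j l)
      = -∑ m, (∑ i, A m i * Q i k) * (∑ j, A m j * Q j l) := by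
    have h1 : ∑ i, ∑ j, f i o * (Q i k * Q j l) = 0 := by
      simp only [← Finset.mul_sum, hcol, mul_zero, Finset.sum_const_zero]
    have h2 : ∑ i, ∑ j, f o j * (Q i k * Q j l) = 0 := by
      rw [Finset.sum_comm]
      simp only [← Finset.mul_sum, ← Finset.sum_mul, hcol, mul_zero, zero_mul,
        Finset.sum_const_zero]
    have h3 : ∑ i, ∑ j, (∑ m, A m i * A m j) * (Q i k * Q j l)
        = ∑ m, (∑ i, A m i * Q i k) * (∑ j, A m j * Q j l) := by
      simp only [Finset.sum_mul_sum]
      simp only [Finset.sum_mul]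
      symm
      rw [Finset.sum_comm]
      refine Finset.sum_congr rfl fun i _ => ?_
      rw [Finset.sum_comm]
      refine Finset.sum_congr rfl fun j _ => Finset.sum_congr rfl fun m _ => ?_
      ring
    calc ∑ i, ∑ j, f i j * (Q i k * Q j l)
        = ∑ i, ∑ j, f i o * (Q i k * Q j l) + ∑ i, ∑ j, f o j * (Q i k * Q j l)
          - ∑ i, ∑ j, (∑ m, A m i * A m j) * (Q i k * Q j l) := by
          simp only [← Finset.sum_add_distrib, ← Finset.sum_sub_distrib]
          refine Finset.sum_congr rfl fun i _ => Finset.sum_congr rfl fun j _ => ?_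
          rw [hA i j]; ring
      _ = _ := by rw [h1, h2, h3]; ring
  have hm (m : Fin n) := hg_neg (fun k => ∑ i, A m i * Q i k) (by
    rw [Finset.sum_comm]
    simp only [← Finset.mul_sum, hrow, mul_zero, Finset.sum_const_zero])
  have : ∑ k, ∑ l, g k l * ∑ i, ∑ j, f i j * (Q i k * Q j l)
      = -∑ m, ∑ k, ∑ l, (∑ i, A m i * Q i k) * (∑ j, A m j * Q j l) * g k l := by
    simp only [key, mul_neg, Finset.sum_neg_distrib]
    congr 1
    symm
    rw [Finset.sum_comm]
    refine Finset.sum_congr rfl fun k _ => ?_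
    rw [Finset.sum_comm]
    refine Finset.sum_congr rfl fun l _ => ?_
    rw [Finset.mul_sum]
    refine Finset.sum_congr rfl fun m _ => ?_
    ring
  rw [this, neg_nonneg]
  exact Finset.sum_nonpos fun m _ => hm m

/-- The kernel of the distortion `E`, viewed as a quadratic form in matrices, themselves viewed as
vectors indexed by pairs. -/
def distortionKernel {n : ℕ} (f g : Fin n → Fin n → ℝ) :
    Matrix (Fin n × Fin n) (Fin n × Fin n) ℝ :=
  fun a b => (f a.1 b.1 - g a.2 b.2) ^ 2

lemma distortionKernel_quad {n : ℕ} (f g Q : Fin n → Fin n → ℝ) :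
    (fun a : Fin n × Fin n => Q a.1 a.2) ⬝ᵥ distortionKernel f g *ᵥ (fun a => Q a.1 a.2)
      = ∑ i, ∑ j, ∑ k, ∑ l, (f i j - g k l) ^ 2 * Q i k * Q j l := by
  simp only [dotProduct, mulVec, distortionKernel, Fintype.sum_prod_type, Finset.mul_sum]
  refine Finset.sum_congr rfl fun i _ => ?_
  rw [Finset.sum_comm]
  refine Finset.sum_congr rfl fun j _ => Finset.sum_congr rfl fun k _ =>
    Finset.sum_congr rfl fun l _ => ?_
  ring

lemma distortion_nonpos {n : ℕ} (o : Fin n) (f g : Fin n → Fin n → ℝ)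
    (hf_symm : ∀ i j, f i j = f j i) (hf_diag : ∀ i, f i i = 0)
    (hf_neg : ∀ v : Fin n → ℝ, ∑ i, v i = 0 → ∑ i, ∑ j, v i * v j * f i j ≤ 0)
    (hg_neg : ∀ v : Fin n → ℝ, ∑ i, v i = 0 → ∑ i, ∑ j, v i * v j * g i j ≤ 0)
    (Q : Fin n → Fin n → ℝ)
    (hrow : ∀ i, ∑ k, Q i k = 0) (hcol : ∀ k, ∑ i, Q i k = 0) :
    ∑ i, ∑ j, ∑ k, ∑ l, (f i j - g k l) ^ 2 * Q i k * Q j l ≤ 0 := by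
  have h := cross_nonneg o f g hf_symm hf_diag hf_neg hg_neg Q hrow hcol
  have hswap (F : Fin n → Fin n → Fin n → Fin n → ℝ) :
      ∑ i, ∑ j, ∑ k, ∑ l, F i j k l = ∑ k, ∑ l, ∑ i, ∑ j, F i j k l := by
    calc ∑ i, ∑ j, ∑ k, ∑ l, F i j k l = ∑ i, ∑ k, ∑ j, ∑ l, F i j k l :=
          Finset.sum_congr rfl fun i _ => Finset.sum_comm
      _ = ∑ k, ∑ i, ∑ l, ∑ j, F i j k l := by
          rw [Finset.sum_comm]
          exact Finset.sum_congr rfl fun k _ => Finset.sum_congr rfl fun i _ => Finset.sum_comm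
      _ = _ := Finset.sum_congr rfl fun k _ => Finset.sum_comm
  have h1 : ∑ i, ∑ j, ∑ k, ∑ l, f i j ^ 2 * Q i k * Q j l = 0 := by
    simp only [← Finset.mul_sum, hrow, mul_zero, Finset.sum_const_zero]
  have h2 : ∑ i, ∑ j, ∑ k, ∑ l, g k l ^ 2 * Q i k * Q j l = 0 := by
    rw [hswap]
    simp only [← Finset.mul_sum, hcol, mul_zero, Finset.sum_const_zero]
  have h3 : ∑ i, ∑ j, ∑ k, ∑ l, g k l * (f i j * (Q i k * Q j l))
      = ∑ k, ∑ l, g k l * ∑ i, ∑ j, f i j * (Q i k * Q j l) := by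
    rw [hswap]
    simp only [Finset.mul_sum]
  have : ∑ i, ∑ j, ∑ k, ∑ l, (f i j - g k l) ^ 2 * Q i k * Q j l
      = ∑ i, ∑ j, ∑ k, ∑ l, f i j ^ 2 * Q i k * Q j l
        + ∑ i, ∑ j, ∑ k, ∑ l, g k l ^ 2 * Q i k * Q j l
        - 2 * ∑ i, ∑ j, ∑ k, ∑ l, g k l * (f i j * (Q i k * Q j l)) := by
    simp only [Finset.mul_sum, ← Finset.sum_add_distrib, ← Finset.sum_sub_distrib]
    refine Finset.sum_congr rfl fun i _ => Finset.sum_congr rfl fun j _ =>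
      Finset.sum_congr rfl fun k _ => Finset.sum_congr rfl fun l _ => ?_
    ring
  rw [this, h1, h2, h3]
  linarith

theorem negative_type_embedding_isometric (n : ℕ) (hn : 1 ≤ n)
    (f g : Fin n → Fin n → ℝ)
    (hf_symm : ∀ i j, f i j = f j i) (hf_diag : ∀ i, f i i = 0)
    (hf_nonneg : ∀ i j, 0 ≤ f i j)
    (hf_tri : ∀ i j k, f i j ≤ f i k + f k j)
    (hg_symm : ∀ i j, g i j = g j i) (hg_diag : ∀ i, g i i = 0)
    (hg_nonneg : ∀ i j, 0 ≤ g i j)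
    (hg_tri : ∀ i j k, g i j ≤ g i k + g k j)
    (hf_neg : ∀ v : Fin n → ℝ, ∑ i, v i = 0 → ∑ i, ∑ j, v i * v j * f i j ≤ 0)
    (hg_neg : ∀ v : Fin n → ℝ, ∑ i, v i = 0 → ∑ i, ∑ j, v i * v j * g i j ≤ 0)
    (P : Fin n → Fin n → ℝ)
    (hP_nonneg : ∀ i j, 0 ≤ P i j)
    (hP_row : ∀ i, ∑ j, P i j = 1) (hP_col : ∀ j, ∑ i, P i j = 1) :
    ∃ σ : Equiv.Perm (Fin n),
      ∑ i, ∑ j, (f i j - g (σ i) (σ j)) ^ 2 ≤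
        ∑ i, ∑ j, ∑ k, ∑ l, (f i j - g k l) ^ 2 * P i k * P j l := by
  obtain ⟨w, hw, hw1, hwP⟩ := exists_eq_sum_perm_of_mem_doublyStochastic
    (M := (Matrix.of P)) (mem_doublyStochastic_iff_sum.2 ⟨hP_nonneg, hP_row, hP_col⟩)
  let X : Equiv.Perm (Fin n) → Fin n → Fin n → ℝ := fun σ i k => if σ i = k then 1 else 0
  have hPX (i k : Fin n) : P i k = ∑ σ, w σ * X σ i k := by
    have := congrFun (congrFun hwP i) k
    simp only [Matrix.sum_apply, Matrix.smul_apply, of_apply] at this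
    rw [← this]
    refine Finset.sum_congr rfl fun σ _ => ?_
    simp [X, Equiv.Perm.permMatrix, PEquiv.toMatrix_apply, Equiv.toPEquiv_apply, eq_comm]
  obtain ⟨σ, hσ⟩ := exists_dotProduct_mulVec_le (distortionKernel f g) w hw hw1
    (fun σ a => X σ a.1 a.2) (fun a => P a.1 a.2)
    (by ext a; simp [hPX])
    (fun σ => by
      have := distortion_nonpos ⟨0, hn⟩ f g hf_symm hf_diag hf_neg hg_neg
        (fun i k => X σ i k - P i k)
        (fun i => by simp [X, hP_row])
        (fun k => by simp [X, hP_col, ← Equiv.eq_symm_apply])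
      rwa [← distortionKernel_quad] at this)
  refine ⟨σ, ?_⟩
  rw [distortionKernel_quad f g P, distortionKernel_quad f g (X σ)] at hσ
  simpa [X] using hσ
end

section
/- Let d : Fin (m+1) → Fin (m+1) → ℝ be a distance matrix and let n : ℕ. Then there exist points y : Fin (m+1) → EuclideanSpace ℝ (Fin n) with dist (y i) (y j) = d i j for all i, j, if and only if the Gram matrix G of d (with base point the last index) is positive semidefinite and has rank at most n. -/
/-!
A configuration `y` determines the vectors `v i = y i - y p` from the base point `p`, and by
polarization `⟪v i, v j⟫` is exactly the corresponding entry of `gramMatrix m d`; this is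
`gramMatrix_eq_gram`. A Gram matrix is positive semidefinite, and its rank is the dimension of the
span of the vectors (`rank_gram`), here at most `n`.

Conversely, a positive semidefinite matrix `G` factors as `Bᴴ * B`, so that it is the Gram matrix of
the columns of `B`. The span of these columns has dimension `G.rank ≤ n`, hence embeds isometrically
in `EuclideanSpace ℝ (Fin n)` (`exists_linearIsometry_of_finrank_le`), and `G` is therefore the Gram
matrix of vectors there (`exists_gram_eq`). Placing the base point at the origin and the other
points at these vectors realizes `d`, since by polarization again the squared distances are
recovered from the entries of `G`.
-/

/-- The Gram matrix of a finite (pseudo-)distance matrix on `Fin (m+1)`,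
with base point the last index. -/
noncomputable def gramMatrix (m : ℕ) (d : Fin (m + 1) → Fin (m + 1) → ℝ) :
    Matrix (Fin m) (Fin m) ℝ :=
  Matrix.of fun i j =>
    (1 / 2) * ((d i.castSucc (Fin.last m)) ^ 2 + (d j.castSucc (Fin.last m)) ^ 2 -
      (d i.castSucc j.castSucc) ^ 2)

open Module in
lemma exists_linearIsometry_of_finrank_le {E : Type*} [NormedAddCommGroup E]
    [InnerProductSpace ℝ E] [FiniteDimensional ℝ E] {n : ℕ} (h : finrank ℝ E ≤ n) :
    Nonempty (E →ₗᵢ[ℝ] EuclideanSpace ℝ (Fin n)) := by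
  let b := stdOrthonormalBasis ℝ E
  let f : E →ₗ[ℝ] EuclideanSpace ℝ (Fin n) :=
    b.toBasis.constr ℝ fun i => EuclideanSpace.basisFun (Fin n) ℝ (Fin.castLE h i)
  have hb : Orthonormal ℝ b.toBasis := by simp
  refine ⟨f.isometryOfOrthonormal hb ?_⟩
  have hf : f ∘ b.toBasis = EuclideanSpace.basisFun (Fin n) ℝ ∘ Fin.castLE h := by
    funext i
    exact b.toBasis.constr_basis ℝ _ i
  rw [hf]
  exact (EuclideanSpace.basisFun (Fin n) ℝ).orthonormal.comp _ (Fin.castLE_injective h)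

open Matrix in
/-- The rank of a Gram matrix is the dimension of the span of the vectors, as seen by writing it as
`Aᴴ * A`, where the columns of `A` are the coordinate vectors in an orthonormal basis. -/
lemma rank_gram {ι κ : Type*} [Fintype ι] [Fintype κ] (v : ι → EuclideanSpace ℝ κ) :
    (gram ℝ v).rank = Module.finrank ℝ (Submodule.span ℝ (Set.range v)) := by
  classical
  rw [gram_eq_conjTranspose_mul (EuclideanSpace.basisFun κ ℝ) v, rank_conjTranspose_mul_self,
    rank_eq_finrank_span_cols,
    ← LinearEquiv.finrank_map_eq (WithLp.linearEquiv 2 ℝ (κ → ℝ)) (Submodule.span ℝ (Set.range v)),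
    Submodule.map_span, ← Set.range_comp]
  rfl

open Matrix in
lemma exists_gram_eq {m n : ℕ} {G : Matrix (Fin m) (Fin m) ℝ} (hG : G.PosSemidef)
    (hr : G.rank ≤ n) : ∃ z : Fin m → EuclideanSpace ℝ (Fin n), gram ℝ z = G := by
  obtain ⟨k, w, hw⟩ := posSemidef_iff_eq_sum_vecMulVec.mp hG
  -- the columns of the matrix whose rows are the vectors `w`
  let c : Fin m → EuclideanSpace ℝ (Fin k) := fun j => WithLp.toLp 2 fun l => w l j
  have hc : gram ℝ c = G := by
    ext i j
    simp [hw, c, PiLp.inner_apply, Matrix.sum_apply, vecMulVec_apply, mul_comm]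
  rw [← hc, rank_gram] at hr
  obtain ⟨φ⟩ := exists_linearIsometry_of_finrank_le hr
  refine ⟨fun i => φ ⟨c i, Submodule.subset_span ⟨i, rfl⟩⟩, ?_⟩
  ext i j
  simp [← hc]

open Matrix in
lemma gramMatrix_eq_gram {E : Type*} [NormedAddCommGroup E] [InnerProductSpace ℝ E] {m : ℕ}
    {d : Fin (m + 1) → Fin (m + 1) → ℝ} {y : Fin (m + 1) → E}
    (hy : ∀ i j, dist (y i) (y j) = d i j) :
    gramMatrix m d = gram ℝ fun i : Fin m => y i.castSucc - y (Fin.last m) := by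
  ext i j
  simp only [gramMatrix, of_apply, gram_apply, ← hy, dist_eq_norm]
  rw [real_inner_eq_norm_mul_self_add_norm_mul_self_sub_norm_sub_mul_self_div_two,
    sub_sub_sub_cancel_right]
  ring

theorem euclidean_embedding_iff_gram_posSemidef_rank_le (m n : ℕ)
    (d : Fin (m + 1) → Fin (m + 1) → ℝ)
    (h_symm : ∀ i j, d i j = d j i) (h_diag : ∀ i, d i i = 0)
    (h_nonneg : ∀ i j, 0 ≤ d i j)
    (h_tri : ∀ i j k, d i j ≤ d i k + d k j) :
    (∃ y : Fin (m + 1) → EuclideanSpace ℝ (Fin n),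
        ∀ i j, dist (y i) (y j) = d i j) ↔
      (gramMatrix m d).PosSemidef ∧ (gramMatrix m d).rank ≤ n := by
  constructor
  · rintro ⟨y, hy⟩
    rw [gramMatrix_eq_gram hy]
    refine ⟨Matrix.posSemidef_gram ℝ _, ?_⟩
    rw [rank_gram]
    exact (Submodule.finrank_le _).trans_eq finrank_euclideanSpace_fin
  · rintro ⟨hG, hr⟩
    obtain ⟨z, hz⟩ := exists_gram_eq hG hr
    have hin (i j : Fin m) : inner ℝ (z i) (z j) = gramMatrix m d i j := by
      rw [← hz, Matrix.gram_apply]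
    have hnorm (i : Fin m) : ‖z i‖ = d i.castSucc (Fin.last m) := by
      rw [← sq_eq_sq₀ (norm_nonneg _) (h_nonneg _ _), ← real_inner_self_eq_norm_sq, hin]
      simp only [gramMatrix, Matrix.of_apply, h_diag]
      ring
    refine ⟨Fin.lastCases 0 z, fun i j => ?_⟩
    induction i using Fin.lastCases with
    | last =>
      induction j using Fin.lastCases with
      | last => simp [h_diag]
      | cast j => simp [hnorm, h_symm (Fin.last m)]
    | cast i =>
      induction j using Fin.lastCases with
      | last => simp [hnorm]
      | cast j =>
        simp only [Fin.lastCases_castSucc]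
        rw [← sq_eq_sq₀ dist_nonneg (h_nonneg _ _), dist_eq_norm, norm_sub_sq_real, hin, hnorm,
          hnorm]
        simp only [gramMatrix, Matrix.of_apply]
        ring
end

section
/- Let d : Fin m → Fin m → ℝ be a distance matrix. Then the square-root space (X, d^{1/2}) is Euclidean — i.e. there exist n : ℕ and points y : Fin m → EuclideanSpace ℝ (Fin n) with dist (y i) (y j) = Real.sqrt (d i j) for all i, j — if and only if d is of negative type, i.e. for every v : Fin m → ℝ with ∑ i, v i = 0 one has ∑_{i,j} v i · v j · d i j ≤ 0. -/
/-!
This is Schoenberg's criterion. If `d i j = ‖y i - y j‖ ^ 2` and `∑ i, v i = 0`, then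
`∑ i, ∑ j, v i * v j * d i j = -2 * ‖∑ i, v i • y i‖ ^ 2`, which is nonpositive. Conversely, fix a
base point `o`; if `y o = 0`, the Gram matrix of an embedding `y` has to be
`G i j = (d i o + d j o - d i j) / 2` (`gromovMatrix`). Negative type makes `G` positive
semidefinite: the quadratic form of `G` at `x` is `-1/2` times that of `d` at the sum-zero vector
`x - (∑ i, x i) δ_o` (`gromovMatrix_posSemidef`). Hence `G = Bᴴ * B`, and the columns of `B` are
the points sought.
-/

/-- The matrix `(d i o + d j o - d i j) / 2` of Gromov products based at `o`. If `d i j` is a squared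
Euclidean distance, this is the Gram matrix of the points translated so that `o` is the origin. -/
noncomputable def gromovMatrix {m : ℕ} (d : Fin m → Fin m → ℝ) (o : Fin m) :
    Matrix (Fin m) (Fin m) ℝ :=
  Matrix.of fun i j => (d i o + d j o - d i j) / 2

lemma gromovMatrix_posSemidef {m : ℕ} (d : Fin m → Fin m → ℝ) (o : Fin m)
    (h_symm : ∀ i j, d i j = d j i) (h_diag : ∀ i, d i i = 0)
    (h : ∀ v : Fin m → ℝ, ∑ i, v i = 0 → ∑ i, ∑ j, v i * v j * d i j ≤ 0) :
    (gromovMatrix d o).PosSemidef := by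
  refine .of_dotProduct_mulVec_nonneg ?_ fun x => ?_
  · ext i j
    simp [gromovMatrix, h_symm j i, add_comm]
  · set S := ∑ i, x i with hS
    have key := h (fun i => x i - if i = o then S else 0) (by simp [hS])
    have lhs : ∑ i, ∑ j, (x i - if i = o then S else 0) * (x j - if j = o then S else 0) * d i j
        = ∑ i, ∑ j, x i * x j * d i j - 2 * (S * ∑ i, x i * d i o) := by
      simp only [sub_mul, mul_sub, ite_mul, mul_ite, zero_mul, mul_zero, Finset.sum_sub_distrib,
        Finset.sum_ite_eq', Finset.sum_ite_irrel, Finset.sum_const_zero, Finset.mem_univ, if_true,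
        h_diag, h_symm o, mul_assoc, mul_left_comm _ S, ← Finset.mul_sum]
      ring
    have rhs : star x ⬝ᵥ (gromovMatrix d o).mulVec x
        = S * ∑ i, x i * d i o - (∑ i, ∑ j, x i * x j * d i j) / 2 := by
      have e : ∀ i j, x i * ((d i o + d j o - d i j) / 2 * x j)
          = (x i * d i o) * x j / 2 + x i * (x j * d j o) / 2 - x i * x j * d i j / 2 :=
        fun i j => by ring
      simp only [dotProduct, Matrix.mulVec, gromovMatrix, Matrix.of_apply, Pi.star_apply,
        star_trivial, Finset.mul_sum _ _ (x _), e, Finset.sum_sub_distrib, Finset.sum_add_distrib,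
        ← Finset.sum_div]
      simp only [← Finset.mul_sum, ← Finset.sum_mul, ← hS]
      ring
    rw [lhs] at key
    rw [rhs]
    linarith

open scoped MatrixOrder ComplexOrder in
/-- A positive semidefinite matrix is a Gram matrix: the points are the columns of `B` in a
factorization `G = Bᴴ * B`. -/
lemma exists_gram_eq_s12 {m : ℕ} {G : Matrix (Fin m) (Fin m) ℝ} (hG : G.PosSemidef) :
    ∃ y : Fin m → EuclideanSpace ℝ (Fin m), ∀ i j, inner ℝ (y i) (y j) = G i j := by
  obtain ⟨B, rfl⟩ := CStarAlgebra.nonneg_iff_eq_star_mul_self.mp hG.nonneg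
  refine ⟨fun i => WithLp.toLp 2 fun k => B k i, fun i j => ?_⟩
  simp [PiLp.inner_apply, Matrix.mul_apply, mul_comm]

theorem sqrt_euclidean_iff_negative_type (m : ℕ) (d : Fin m → Fin m → ℝ)
    (h_symm : ∀ i j, d i j = d j i) (h_diag : ∀ i, d i i = 0)
    (h_nonneg : ∀ i j, 0 ≤ d i j)
    (h_tri : ∀ i j k, d i j ≤ d i k + d k j) :
    (∃ n : ℕ, ∃ y : Fin m → EuclideanSpace ℝ (Fin n),
        ∀ i j, dist (y i) (y j) = Real.sqrt (d i j)) ↔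
      (∀ v : Fin m → ℝ, ∑ i, v i = 0 → ∑ i, ∑ j, v i * v j * d i j ≤ 0) := by
  constructor
  · rintro ⟨n, y, hy⟩ v hv
    have key := inner_sum_smul_sum_smul_of_sum_eq_zero y hv y hv
    simp only [← dist_eq_norm, hy, Real.mul_self_sqrt (h_nonneg _ _)] at key
    have := real_inner_self_nonneg (x := ∑ i, v i • y i)
    linarith
  · intro h
    rcases m with _ | m
    · exact ⟨0, fun _ => 0, fun i => i.elim0⟩
    obtain ⟨y, hy⟩ := exists_gram_eq_s12 (gromovMatrix_posSemidef d 0 h_symm h_diag h)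
    refine ⟨m + 1, y, fun i j => ?_⟩
    rw [dist_eq_norm, ← Real.sqrt_sq (norm_nonneg _), norm_sub_sq_real,
      ← real_inner_self_eq_norm_sq, ← real_inner_self_eq_norm_sq, hy, hy, hy]
    congr 1
    simp only [gromovMatrix, Matrix.of_apply, h_diag]
    ring
end

section
/- Let d : Fin m → Fin m → ℝ be a distance matrix. Then d is Euclidean — i.e. there exist n : ℕ and points y : Fin m → EuclideanSpace ℝ (Fin n) with dist (y i) (y j) = d i j for all i, j — if and only if for every η : Fin m → ℝ with ∑ i, η i = 0 one has ∑_{i,j} η i · η j · (d i j)² ≤ 0. -/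
/-!
If `∑ i, η i = 0`, expanding `‖∑ i, η i • y i‖²` with polarization gives
`∑ i j, η i η j (dist (y i) (y j))² = -2 ‖∑ i, η i • y i‖²`, so Euclidean distance matrices satisfy
the sign condition. Conversely, fix a base point `o`. The matrix
`G i j = (d i o)² + (d o j)² - (d i j)²` is what twice the Gram matrix of the vectors `y i - y o`
would have to be. Its quadratic form at `x` equals minus the form of `d²` at the zero-sum vector
`x - (∑ k, x k) e_o`, so the sign condition makes `G` positive semidefinite. A decomposition of `G`
as a sum of rank-one matrices then provides the coordinates of the points, up to the factor `√2`.
-/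

/-- Replacing `x` by the zero-sum vector `x - (∑ k, x k) e_o` turns the quadratic form of `D` into
minus the form of the candidate Gram matrix based at `o`. -/
lemma sum_recentred {ι : Type*} [Fintype ι] [DecidableEq ι] (D : ι → ι → ℝ) (o : ι)
    (h_diag : D o o = 0) (x : ι → ℝ) :
    ∑ i, ∑ j, (x i - (∑ k, x k) * (Pi.single o 1 : ι → ℝ) i) *
        (x j - (∑ k, x k) * (Pi.single o 1 : ι → ℝ) j) * D i j =
      -∑ i, ∑ j, x i * x j * (D i o + D o j - D i j) := by
  set s := ∑ k, x k with hs
  have h1 : ∑ i, ∑ j, x i * x j * D i o = s * ∑ i, x i * D i o := by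
    rw [hs, Finset.sum_mul_sum, Finset.sum_comm]
    exact Finset.sum_congr rfl fun _ _ => Finset.sum_congr rfl fun _ _ => by ring
  have h2 : ∑ i, ∑ j, x i * x j * D o j = s * ∑ j, x j * D o j := by
    rw [hs, Finset.sum_mul_sum]
    exact Finset.sum_congr rfl fun _ _ => Finset.sum_congr rfl fun _ _ => by ring
  have hL : ∀ i, ∑ j, (x i - s * (Pi.single o 1 : ι → ℝ) i) *
      (x j - s * (Pi.single o 1 : ι → ℝ) j) * D i j =
      (x i - s * (Pi.single o 1 : ι → ℝ) i) * ((∑ j, x j * D i j) - s * D i o) := by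
    intro i
    simp [mul_assoc, ← Finset.mul_sum, sub_mul, Finset.sum_sub_distrib, Pi.single_apply]
  rw [Finset.sum_congr rfl fun i _ => hL i]
  simp only [mul_add, mul_sub, Finset.sum_add_distrib, Finset.sum_sub_distrib, h1, h2]
  have h3 : ∑ i, ∑ j, x i * x j * D i j = ∑ i, x i * ∑ j, x j * D i j := by
    simp only [Finset.mul_sum, mul_assoc]
  have h4 : ∑ i, x i * (s * D i o) = s * ∑ i, x i * D i o := by
    rw [Finset.mul_sum]
    exact Finset.sum_congr rfl fun _ _ => by ring
  rw [h3]
  simp only [sub_mul, Finset.sum_sub_distrib, h4]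
  simp [Pi.single_apply, mul_assoc, ← Finset.mul_sum, h_diag]
  ring

theorem euclidean_iff_squared_cond_neg (m : ℕ) (d : Fin m → Fin m → ℝ)
    (h_symm : ∀ i j, d i j = d j i) (h_diag : ∀ i, d i i = 0)
    (h_nonneg : ∀ i j, 0 ≤ d i j)
    (h_tri : ∀ i j k, d i j ≤ d i k + d k j) :
    (∃ n : ℕ, ∃ y : Fin m → EuclideanSpace ℝ (Fin n),
        ∀ i j, dist (y i) (y j) = d i j) ↔
      (∀ η : Fin m → ℝ, ∑ i, η i = 0 → ∑ i, ∑ j, η i * η j * (d i j) ^ 2 ≤ 0) := by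
  constructor
  · rintro ⟨n, y, hy⟩ η hη
    have h := inner_sum_smul_sum_smul_of_sum_eq_zero (s₁ := Finset.univ) (s₂ := Finset.univ)
      y hη y hη
    simp only [← dist_eq_norm, hy, ← sq] at h
    linarith [real_inner_self_nonneg (x := ∑ i, η i • y i)]
  · intro h
    rcases isEmpty_or_nonempty (Fin m) with hm | ⟨⟨o⟩⟩
    · exact ⟨0, fun _ => 0, fun i => hm.elim i⟩
    let G : Matrix (Fin m) (Fin m) ℝ :=
      Matrix.of fun i j => d i o ^ 2 + d o j ^ 2 - d i j ^ 2
    have hG : G.PosSemidef := by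
      refine .of_dotProduct_mulVec_nonneg ?_ fun x => ?_
      · ext i j
        simp only [G, Matrix.conjTranspose_apply, Matrix.of_apply, star_trivial]
        rw [h_symm j o, h_symm o i, h_symm j i]
        ring
      · have hx := h (fun i => x i - (∑ k, x k) * (Pi.single o 1 : Fin m → ℝ) i)
          (by simp [Finset.sum_sub_distrib, ← Finset.mul_sum])
        rw [sum_recentred (fun i j => d i j ^ 2) o (by simp [h_diag]) x] at hx
        have e : star x ⬝ᵥ G.mulVec x =
            ∑ i, ∑ j, x i * x j * (d i o ^ 2 + d o j ^ 2 - d i j ^ 2) := by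
          simp only [dotProduct, Matrix.mulVec, Finset.mul_sum, star_trivial, G, Matrix.of_apply]
          exact Finset.sum_congr rfl fun _ _ => Finset.sum_congr rfl fun _ _ => by ring
        rw [e]
        linarith
    obtain ⟨n, v, hv⟩ := Matrix.posSemidef_iff_eq_sum_vecMulVec.mp hG
    have hGv : ∀ i j, ∑ k, v k i * v k j = d i o ^ 2 + d o j ^ 2 - d i j ^ 2 := by
      intro i j
      have := congrFun (congrFun hv i) j
      simpa [G, Matrix.sum_apply, Matrix.vecMulVec_apply] using this.symm
    refine ⟨n, fun i => WithLp.toLp 2 fun k => v k i / √2, fun i j => ?_⟩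
    rw [EuclideanSpace.dist_eq]
    refine Eq.trans (congrArg Real.sqrt ?_) (Real.sqrt_sq (h_nonneg i j))
    have e : ∀ k, dist (v k i / √2) (v k j / √2) ^ 2 =
        (v k i * v k i - 2 * (v k i * v k j) + v k j * v k j) / 2 := by
      intro k
      rw [Real.dist_eq, sq_abs, ← sub_div, div_pow, Real.sq_sqrt (by norm_num)]
      ring
    simp only [e, ← Finset.sum_div, Finset.sum_add_distrib, Finset.sum_sub_distrib,
      ← Finset.mul_sum, hGv]
    rw [h_symm o i, h_symm o j, h_diag i, h_diag j]
    ring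
end

section
/- Let d : Fin m → Fin m → ℝ be a distance matrix. Then d is Euclidean — i.e. there exist n : ℕ and points y : Fin m → EuclideanSpace ℝ (Fin n) with dist (y i) (y j) = d i j for all i, j — if and only if for every η : Fin m → ℝ with ∑ i, η i = 0 and every real λ > 0 one has ∑_{i,j} Real.exp (−λ · (d i j)²) · η i · η j ≥ 0 (Schoenberg's criterion: all Gaussian kernels of d are conditionally positive semi-definite on the hyperplane of zero-sum vectors). -/
/-!
Write `D i j = (d i j) ^ 2`. If `d` is realised by points `y i`, then
`exp (-lam * D i j) = exp (-lam * ‖y i‖ ^ 2) * exp (-lam * ‖y j‖ ^ 2) * exp (2 * lam * ⟪y i, y j⟫)`.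
The first two factors can be absorbed into the vector `η`, and the last one is the entrywise
exponential of a nonnegative multiple of a Gram matrix, so it is positive semidefinite by the Schur
product theorem applied to each term of the power series (`exp_entrywise_nonneg`).
This direction does not need `∑ i, η i = 0`.

Conversely, for a zero-sum `η` the function `lam ↦ ∑ i, ∑ j, exp (-lam * D i j) * η i * η j` vanishes
at `0` and is nonnegative for `lam > 0`, so its derivative `-∑ i, ∑ j, D i j * η i * η j` at `0` is
nonnegative (`neg_type_of_gaussian`). Hence `D` is of negative type, and for a base point `o` the
matrix with entries `(D i o + D j o - D i j) / 2` is positive semidefinite; a factorisation of it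
as a Gram matrix gives the points (`exists_points_of_neg_type`).
-/

open Matrix in
/-- The quadratic form of a real positive semidefinite matrix, as a double sum. -/
lemma sum_nonneg_of_posSemidef {m : ℕ} {M : Matrix (Fin m) (Fin m) ℝ} (hM : M.PosSemidef)
    (c : Fin m → ℝ) : 0 ≤ ∑ i, ∑ j, M i j * c i * c j := by
  have h := hM.dotProduct_mulVec_nonneg c
  simp only [dotProduct, mulVec, Finset.mul_sum, Pi.star_apply, star_trivial] at h
  refine h.trans_eq (Finset.sum_congr rfl fun i _ => Finset.sum_congr rfl fun j _ => ?_)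
  ring

open Matrix in
/-- Entrywise powers of a positive semidefinite matrix are positive semidefinite, by the Schur
product theorem. The zeroth power is the all-ones matrix. -/
lemma posSemidef_entrywise_pow {m : ℕ} {M : Matrix (Fin m) (Fin m) ℝ} (hM : M.PosSemidef)
    (n : ℕ) : (Matrix.of fun i j => M i j ^ n).PosSemidef := by
  induction n with
  | zero =>
    have h := posSemidef_vecMulVec_self_star (fun _ : Fin m => (1 : ℝ))
    convert h using 1
    ext i j
    simp [vecMulVec_apply]
  | succ n ih =>
    have e : (Matrix.of fun i j => M i j ^ (n + 1)) = (Matrix.of fun i j => M i j ^ n) ⊙ M := by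
      ext i j
      simp [pow_succ]
    rw [e]
    exact ih.hadamard hM

lemma exp_entrywise_nonneg {m : ℕ} {M : Matrix (Fin m) (Fin m) ℝ} (hM : M.PosSemidef)
    (c : Fin m → ℝ) : 0 ≤ ∑ i, ∑ j, Real.exp (M i j) * c i * c j := by
  have hs : HasSum (fun n : ℕ => ∑ i, ∑ j, M i j ^ n / (n.factorial : ℝ) * c i * c j)
      (∑ i, ∑ j, Real.exp (M i j) * c i * c j) := by
    refine hasSum_sum fun i _ => hasSum_sum fun j _ => ?_
    have h := NormedSpace.expSeries_div_hasSum_exp (M i j)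
    rw [← Real.exp_eq_exp_ℝ] at h
    exact (h.mul_right (c i)).mul_right (c j)
  refine hs.nonneg fun n => ?_
  have h := sum_nonneg_of_posSemidef (posSemidef_entrywise_pow hM n) c
  have e : ∑ i, ∑ j, M i j ^ n / (n.factorial : ℝ) * c i * c j
      = (∑ i, ∑ j, M i j ^ n * c i * c j) / (n.factorial : ℝ) := by
    simp only [Finset.sum_div]
    refine Finset.sum_congr rfl fun i _ => Finset.sum_congr rfl fun j _ => ?_
    ring
  rw [e]
  exact div_nonneg h (by positivity)

/-- Gaussian kernels of points in an inner product space are positive semidefinite. -/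
lemma gaussian_nonneg {m : ℕ} {E : Type*} [NormedAddCommGroup E] [InnerProductSpace ℝ E]
    (y : Fin m → E) (η : Fin m → ℝ) {lam : ℝ} (hl : 0 < lam) :
    0 ≤ ∑ i, ∑ j, Real.exp (-lam * dist (y i) (y j) ^ 2) * η i * η j := by
  have hM : ((2 * lam) • Matrix.gram ℝ y).PosSemidef :=
    (Matrix.posSemidef_gram ℝ y).smul (by positivity)
  have h := exp_entrywise_nonneg hM fun i => Real.exp (-lam * ‖y i‖ ^ 2) * η i
  refine h.trans_eq (Finset.sum_congr rfl fun i _ => Finset.sum_congr rfl fun j _ => ?_)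
  have e : -lam * dist (y i) (y j) ^ 2 = ((2 * lam) • Matrix.gram ℝ y) i j
      + -lam * ‖y i‖ ^ 2 + -lam * ‖y j‖ ^ 2 := by
    rw [dist_eq_norm, norm_sub_sq_real]
    simp only [Matrix.smul_apply, Matrix.gram_apply, smul_eq_mul]
    ring
  rw [e, Real.exp_add, Real.exp_add]
  ring

/-- The infinitesimal form, at `lam = 0`, of nonnegativity of all Gaussian kernels. -/
lemma neg_type_of_gaussian {m : ℕ} (D : Fin m → Fin m → ℝ) (η : Fin m → ℝ)
    (hη : ∑ i, η i = 0)
    (h : ∀ lam : ℝ, 0 < lam → 0 ≤ ∑ i, ∑ j, Real.exp (-lam * D i j) * η i * η j) :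
    ∑ i, ∑ j, D i j * η i * η j ≤ 0 := by
  have hd : HasDerivAt (fun t : ℝ => ∑ i, ∑ j, Real.exp (-t * D i j) * η i * η j)
      (∑ i, ∑ j, -(D i j) * η i * η j) 0 := by
    refine HasDerivAt.fun_sum fun i _ => HasDerivAt.fun_sum fun j _ => ?_
    have h1 : HasDerivAt (fun t : ℝ => -t * D i j) (-(D i j)) 0 := by
      simpa using ((hasDerivAt_id (0 : ℝ)).neg).mul_const (D i j)
    simpa using (h1.exp.mul_const (η i)).mul_const (η j)
  have h0 : ∑ i, ∑ j, Real.exp (-0 * D i j) * η i * η j = 0 := by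
    simp [← Finset.mul_sum, hη]
  have key : 0 ≤ ∑ i, ∑ j, -(D i j) * η i * η j := by
    refine ge_of_tendsto hd.tendsto_slope_zero_right ?_
    filter_upwards [self_mem_nhdsWithin] with t ht
    have ht' : (0 : ℝ) < t := ht
    simp only [h0, zero_add, sub_zero, smul_eq_mul]
    exact mul_nonneg (by positivity) (h t ht')
  simp only [neg_mul, Finset.sum_neg_distrib] at key
  linarith

/-- The matrix of would-be inner products `⟪y i - y o, y j - y o⟫` of a negative-type `D` is positive
semidefinite. -/
lemma posSemidef_of_neg_type {m : ℕ} (D : Fin m → Fin m → ℝ)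
    (hs : ∀ i j, D i j = D j i) (h0 : ∀ i, D i i = 0)
    (h : ∀ η : Fin m → ℝ, ∑ i, η i = 0 → ∑ i, ∑ j, D i j * η i * η j ≤ 0) (o : Fin m) :
    (Matrix.of fun i j => (D i o + D j o - D i j) / 2).PosSemidef := by
  refine .of_dotProduct_mulVec_nonneg ?_ fun c => ?_
  · ext i j
    simp [hs i j, add_comm]
  -- Moving the total mass of `c` to the base point makes it a zero-sum vector.
  have hη := h (fun i => c i - if i = o then ∑ k, c k else 0) (by simp)
  set S := ∑ k, c k with hS
  set P := ∑ i, D i o * c i with hP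
  set Q := ∑ i, ∑ j, D i j * c i * c j with hQ
  have e1 : ∑ i, ∑ j, D i j * (c i - if i = o then S else 0) * (c j - if j = o then S else 0)
      = Q - 2 * S * P := by
    have a : ∀ i, ∑ j, D i j * (c i - if i = o then S else 0) * (c j - if j = o then S else 0)
        = ∑ j, D i j * c i * c j - S * (D i o * c i)
          - if i = o then S * P else 0 := by
      intro i
      have b : ∀ x : ℝ, ∑ j, D i j * x * (c j - if j = o then S else 0)
          = ∑ j, D i j * x * c j - D i o * x * S := by
        intro x
        simp [mul_sub, Finset.sum_sub_distrib]
      rw [b]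
      by_cases hi : i = o
      · subst hi
        have : ∑ j, D i j * (c i - S) * c j = ∑ j, D i j * c i * c j - S * P := by
          rw [hP, Finset.mul_sum, ← Finset.sum_sub_distrib]
          refine Finset.sum_congr rfl fun j _ => ?_
          rw [hs j i]
          ring
        simp [this, h0]
      · simp [hi]
        ring
    simp only [a, Finset.sum_sub_distrib, ← Finset.mul_sum]
    simp [← hP, ← hQ]
    ring
  rw [e1] at hη
  have e2 : star c ⬝ᵥ (Matrix.of fun i j => (D i o + D j o - D i j) / 2).mulVec c
      = S * P - Q / 2 := by
    have a : ∀ i, c i * ∑ j, (D i o + D j o - D i j) / 2 * c j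
        = (D i o * c i) * (S / 2) + c i * (P / 2) - (∑ j, D i j * c i * c j) / 2 := by
      intro i
      rw [hS, hP, Finset.sum_div, Finset.sum_div, Finset.sum_div, Finset.mul_sum,
        Finset.mul_sum, Finset.mul_sum, ← Finset.sum_add_distrib, ← Finset.sum_sub_distrib]
      refine Finset.sum_congr rfl fun j _ => ?_
      ring
    simp only [dotProduct, Matrix.mulVec, Pi.star_apply, star_trivial, Matrix.of_apply, a,
      Finset.sum_sub_distrib, Finset.sum_add_distrib, ← Finset.sum_mul, ← Finset.sum_div]
    rw [← hS, ← hP, ← hQ]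
    ring
  rw [e2]
  linarith

/-- Schoenberg's embedding: `D` of negative type is a matrix of squared Euclidean distances. -/
lemma exists_points_of_neg_type {m : ℕ} (D : Fin m → Fin m → ℝ)
    (hs : ∀ i j, D i j = D j i) (h0 : ∀ i, D i i = 0)
    (h : ∀ η : Fin m → ℝ, ∑ i, η i = 0 → ∑ i, ∑ j, D i j * η i * η j ≤ 0) :
    ∃ n : ℕ, ∃ y : Fin m → EuclideanSpace ℝ (Fin n), ∀ i j, dist (y i) (y j) ^ 2 = D i j := by
  rcases isEmpty_or_nonempty (Fin m) with hm | ⟨⟨o⟩⟩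
  · exact ⟨0, fun _ => 0, fun i => hm.elim i⟩
  obtain ⟨n, A, hA⟩ :=
    Matrix.posSemidef_iff_eq_sum_vecMulVec.mp (posSemidef_of_neg_type D hs h0 h o)
  have hG : ∀ i j, (D i o + D j o - D i j) / 2 = ∑ k, A k i * A k j := by
    intro i j
    have := congrFun (congrFun hA i) j
    simpa [Matrix.sum_apply, Matrix.vecMulVec_apply] using this
  refine ⟨n, fun i => WithLp.toLp 2 fun k => A k i, fun i j => ?_⟩
  rw [EuclideanSpace.dist_eq, Real.sq_sqrt (Finset.sum_nonneg fun _ _ => sq_nonneg _)]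
  have e : ∑ k, dist (A k i) (A k j) ^ 2
      = ∑ k, A k i * A k i + ∑ k, A k j * A k j - 2 * ∑ k, A k i * A k j := by
    rw [Finset.mul_sum, ← Finset.sum_add_distrib, ← Finset.sum_sub_distrib]
    refine Finset.sum_congr rfl fun k _ => ?_
    rw [Real.dist_eq, sq_abs]
    ring
  refine e.trans ?_
  rw [← hG, ← hG, ← hG, h0, h0]
  ring

theorem euclidean_iff_schoenberg (m : ℕ) (d : Fin m → Fin m → ℝ)
    (h_symm : ∀ i j, d i j = d j i) (h_diag : ∀ i, d i i = 0)
    (h_nonneg : ∀ i j, 0 ≤ d i j)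
    (h_tri : ∀ i j k, d i j ≤ d i k + d k j) :
    (∃ n : ℕ, ∃ y : Fin m → EuclideanSpace ℝ (Fin n),
        ∀ i j, dist (y i) (y j) = d i j) ↔
      (∀ η : Fin m → ℝ, ∑ i, η i = 0 → ∀ lam : ℝ, 0 < lam →
        0 ≤ ∑ i, ∑ j, Real.exp (-lam * (d i j) ^ 2) * η i * η j) := by
  constructor
  · rintro ⟨n, y, hy⟩ η _ lam hl
    simpa only [hy] using gaussian_nonneg y η hl
  · intro h
    obtain ⟨n, y, hy⟩ := exists_points_of_neg_type (fun i j => d i j ^ 2)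
      (fun i j => by rw [h_symm]) (fun i => by simp [h_diag])
      (fun η hη => neg_type_of_gaussian _ η hη (h η hη))
    exact ⟨n, y, fun i j =>
      (pow_left_inj₀ dist_nonneg (h_nonneg i j) two_ne_zero).mp (hy i j)⟩
end

section
/- Let d : Fin m → Fin m → ℝ be a distance matrix which is Euclidean, i.e. there exist n : ℕ and points y : Fin m → EuclideanSpace ℝ (Fin n) with dist (y i) (y j) = d i j for all i, j. Then for every real c with 0 < c ≤ 1 the power transform d^c is also Euclidean: there exist n' : ℕ and points z : Fin m → EuclideanSpace ℝ (Fin n') with dist (z i) (z j) = (d i j)^c for all i, j. -/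
/-!
This is Schoenberg's theorem that `x ↦ x ^ (2 * c)` preserves Hilbert embeddability of squared
distances. Write `D i j = ‖y i - y j‖ ^ 2`. Entrywise exponentials of Gram matrices are positive
semidefinite by the Schur product theorem and the power series of `exp`, hence so is the Gaussian
kernel `exp (-s * D i j)`. Integrating over `s` against `exp (-s * t)` shows that `(t + D i j)⁻¹` is
positive semidefinite for every `t > 0`. Since `x ^ c` is, for `0 < c < 1`, a positive multiple of
`∫ t in Ioi 0, t ^ c * (t⁻¹ - (t + x)⁻¹)`, the matrix `(D i j) ^ c` is conditionally negative
semidefinite: its quadratic form is nonpositive on vectors with coordinate sum zero.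

Finally, if `E` is symmetric with zero diagonal and conditionally negative semidefinite, then
`(E i 0 + E 0 j - E i j) / 2` is positive semidefinite, and vectors having it as Gram matrix have
squared distances `E i j`. The exponent `c = 1` needs no new points.
-/

open Set MeasureTheory Matrix

/-- Entrywise exponentials of Gram matrices have nonnegative quadratic form. -/
lemma sum_mul_exp_inner_nonneg {ι E : Type*} [Fintype ι] [NormedAddCommGroup E]
    [InnerProductSpace ℝ E] (y : ι → E) (s : ℝ) (hs : 0 ≤ s) (v : ι → ℝ) :
    0 ≤ ∑ i, ∑ j, v i * v j * Real.exp (s * inner ℝ (y i) (y j)) := by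
  have hpow : ∀ k : ℕ,
      (Matrix.of fun i j => inner ℝ (y i) (y j) ^ k : Matrix ι ι ℝ).PosSemidef := by
    intro k
    induction k with
    | zero =>
      convert Matrix.posSemidef_vecMulVec_self_star (fun _ : ι => (1 : ℝ)) using 1
      ext i j
      simp [vecMulVec_apply]
    | succ k ih =>
      have e : (Matrix.of fun i j => inner ℝ (y i) (y j) ^ (k + 1) : Matrix ι ι ℝ)
          = (Matrix.of fun i j => inner ℝ (y i) (y j) ^ k) ⊙ gram ℝ y := by
        ext i j
        simp [pow_succ]
      rw [e]
      exact ih.hadamard (Matrix.posSemidef_gram ℝ y)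
  have hsum : HasSum
      (fun k : ℕ => ∑ i, ∑ j, v i * v j * ((s * inner ℝ (y i) (y j)) ^ k / (k.factorial : ℝ)))
      (∑ i, ∑ j, v i * v j * Real.exp (s * inner ℝ (y i) (y j))) := by
    refine hasSum_sum fun i _ => hasSum_sum fun j _ => HasSum.mul_left _ ?_
    rw [Real.exp_eq_exp_ℝ]
    exact NormedSpace.expSeries_div_hasSum_exp _
  refine hsum.nonneg fun k => ?_
  have h := (hpow k).dotProduct_mulVec_nonneg v
  simp only [dotProduct, mulVec, Matrix.of_apply, star_trivial, Finset.mul_sum] at h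
  have e : ∑ i, ∑ j, v i * v j * ((s * inner ℝ (y i) (y j)) ^ k / (k.factorial : ℝ))
      = (s ^ k / k.factorial) * ∑ i, ∑ j, v i * (inner ℝ (y i) (y j) ^ k * v j) := by
    simp only [Finset.mul_sum, mul_pow]
    refine Finset.sum_congr rfl fun i _ => Finset.sum_congr rfl fun j _ => ?_
    ring
  rw [e]
  positivity

/-- The Gaussian kernel is positive semidefinite: up to the rank-one factor
`exp (-s * ‖y i‖ ^ 2) * exp (-s * ‖y j‖ ^ 2)` it is the exponential of a Gram matrix. -/
lemma sum_mul_gaussian_nonneg {ι E : Type*} [Fintype ι] [NormedAddCommGroup E]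
    [InnerProductSpace ℝ E] (y : ι → E) (s : ℝ) (hs : 0 ≤ s) (v : ι → ℝ) :
    0 ≤ ∑ i, ∑ j, v i * v j * Real.exp (-(s * dist (y i) (y j) ^ 2)) := by
  have h := sum_mul_exp_inner_nonneg y (2 * s) (by positivity)
    (fun i => v i * Real.exp (-(s * ‖y i‖ ^ 2)))
  refine h.trans_eq (Finset.sum_congr rfl fun i _ => Finset.sum_congr rfl fun j _ => ?_)
  rw [dist_eq_norm, norm_sub_sq_real]
  have : -(s * (‖y i‖ ^ 2 - 2 * inner ℝ (y i) (y j) + ‖y j‖ ^ 2))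
      = -(s * ‖y i‖ ^ 2) + -(s * ‖y j‖ ^ 2) + 2 * s * inner ℝ (y i) (y j) := by ring
  rw [this, Real.exp_add, Real.exp_add]
  ring

/-- The kernel `(t + ‖y i - y j‖ ^ 2)⁻¹` is positive semidefinite, as the Laplace transform in `s`
of Gaussian kernels. -/
lemma sum_mul_inv_add_sq_dist_nonneg {ι E : Type*} [Fintype ι] [NormedAddCommGroup E]
    [InnerProductSpace ℝ E] (y : ι → E) (t : ℝ) (ht : 0 < t) (v : ι → ℝ) :
    0 ≤ ∑ i, ∑ j, v i * v j * (t + dist (y i) (y j) ^ 2)⁻¹ := by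
  have hneg : ∀ i j, -(t + dist (y i) (y j) ^ 2) < 0 := fun i j => by
    have := sq_nonneg (dist (y i) (y j)); linarith
  have e : ∀ i j, (t + dist (y i) (y j) ^ 2)⁻¹
      = ∫ s in Ioi (0 : ℝ), Real.exp (-(t + dist (y i) (y j) ^ 2) * s) := fun i j => by
    rw [integral_exp_mul_Ioi (hneg i j)]
    simp [neg_div_neg_eq, -neg_add_rev]
  simp only [e, ← integral_const_mul]
  have hint : ∀ i j, IntegrableOn
      (fun s => v i * v j * Real.exp (-(t + dist (y i) (y j) ^ 2) * s)) (Ioi 0) :=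
    fun i j => (integrableOn_exp_mul_Ioi (hneg i j) 0).const_mul _
  have hswap : ∑ i, ∑ j, ∫ s in Ioi (0 : ℝ),
        v i * v j * Real.exp (-(t + dist (y i) (y j) ^ 2) * s)
      = ∫ s in Ioi (0 : ℝ), ∑ i, ∑ j,
        v i * v j * Real.exp (-(t + dist (y i) (y j) ^ 2) * s) := by
    rw [integral_finsetSum _ fun i _ => integrable_finsetSum _ fun j _ => hint i j]
    exact Finset.sum_congr rfl fun i _ => (integral_finsetSum _ fun j _ => hint i j).symm
  rw [hswap]
  refine setIntegral_nonneg measurableSet_Ioi fun s hs => ?_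
  have h := mul_nonneg (Real.exp_pos (-(t * s))).le
    (sum_mul_gaussian_nonneg y s (le_of_lt hs) v)
  refine h.trans_eq ?_
  simp only [Finset.mul_sum]
  refine Finset.sum_congr rfl fun i _ => Finset.sum_congr rfl fun j _ => ?_
  have : -(t + dist (y i) (y j) ^ 2) * s = -(t * s) + -(s * dist (y i) (y j) ^ 2) := by ring
  rw [this, Real.exp_add]
  ring

/-- Fractional powers of squared distances are conditionally negative semidefinite. -/
lemma sum_mul_sq_dist_rpow_nonpos {ι E : Type*} [Fintype ι] [NormedAddCommGroup E]
    [InnerProductSpace ℝ E] (y : ι → E) (c : ℝ) (hc : c ∈ Ioo (0 : ℝ) 1) (w : ι → ℝ)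
    (hw : ∑ i, w i = 0) :
    ∑ i, ∑ j, w i * w j * (dist (y i) (y j) ^ 2) ^ c ≤ 0 := by
  set K := ∫ t in Ioi (0 : ℝ), Real.rpowIntegrand₀₁ c t 1 with hK
  have hKpos : 0 < K := Real.integral_rpowIntegrand₀₁_one_pos hc
  have hint : ∀ i j, IntegrableOn
      (fun t => w i * w j * Real.rpowIntegrand₀₁ c t (dist (y i) (y j) ^ 2)) (Ioi 0) :=
    fun i j => (Real.integrableOn_rpowIntegrand₀₁_Ioi hc (sq_nonneg _)).const_mul _
  have e : ∑ i, ∑ j, w i * w j * (dist (y i) (y j) ^ 2) ^ c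
      = K⁻¹ * ∫ t in Ioi (0 : ℝ), ∑ i, ∑ j,
        w i * w j * Real.rpowIntegrand₀₁ c t (dist (y i) (y j) ^ 2) := by
    rw [integral_finsetSum _ fun i _ => integrable_finsetSum _ fun j _ => hint i j,
      Finset.mul_sum]
    refine Finset.sum_congr rfl fun i _ => ?_
    rw [integral_finsetSum _ fun j _ => hint i j, Finset.mul_sum]
    refine Finset.sum_congr rfl fun j _ => ?_
    rw [Real.rpow_eq_const_mul_integral hc (sq_nonneg _), integral_const_mul]
    ring
  rw [e]
  refine mul_nonpos_of_nonneg_of_nonpos (inv_nonneg.2 hKpos.le) ?_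
  refine setIntegral_nonpos measurableSet_Ioi fun t ht => ?_
  have ht : 0 < t := ht
  -- The `t⁻¹` part of the integrand drops out because the weights sum to zero.
  have e2 : ∑ i, ∑ j, w i * w j * Real.rpowIntegrand₀₁ c t (dist (y i) (y j) ^ 2)
      = t ^ c * (t⁻¹ * ((∑ i, w i) * ∑ j, w j)
        - ∑ i, ∑ j, w i * w j * (t + dist (y i) (y j) ^ 2)⁻¹) := by
    rw [Finset.sum_mul_sum]
    simp only [Finset.mul_sum, mul_sub, ← Finset.sum_sub_distrib, Real.rpowIntegrand₀₁]
    refine Finset.sum_congr rfl fun i _ => Finset.sum_congr rfl fun j _ => ?_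
    ring
  rw [e2, hw]
  have h := mul_nonneg (Real.rpow_nonneg ht.le c) (sum_mul_inv_add_sq_dist_nonneg y t ht w)
  linarith

/-- Schoenberg's embedding criterion: a symmetric matrix with zero diagonal that is conditionally
negative semidefinite is the matrix of squared distances of a Euclidean point configuration. -/
lemma exists_sq_dist_eq_of_conditionally_nonpos {ι : Type*} [Fintype ι] [DecidableEq ι] (o : ι)
    (D : ι → ι → ℝ) (hsymm : ∀ i j, D i j = D j i) (hdiag : ∀ i, D i i = 0)
    (hneg : ∀ w : ι → ℝ, ∑ i, w i = 0 → ∑ i, ∑ j, w i * w j * D i j ≤ 0) :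
    ∃ n : ℕ, ∃ z : ι → EuclideanSpace ℝ (Fin n), ∀ i j, dist (z i) (z j) ^ 2 = D i j := by
  let P : Matrix ι ι ℝ := Matrix.of fun i j => (D i o + D o j - D i j) / 2
  have hP : P.PosSemidef := by
    refine PosSemidef.of_dotProduct_mulVec_nonneg ?_ fun v => ?_
    · ext i j
      simp [P, hsymm i j, hsymm i o, hsymm o j, add_comm]
    · -- Correct the weight at the base point `o` so that the weights sum to zero.
      have h := hneg (fun i => v i - if i = o then ∑ k, v k else 0) (by simp)
      have e : ∑ i, ∑ j, (v i - if i = o then ∑ k, v k else 0) *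
            (v j - if j = o then ∑ k, v k else 0) * D i j
          = -2 * (star v ⬝ᵥ P *ᵥ v) := by
        have l : ∑ i, ∑ j, (v i - if i = o then ∑ k, v k else 0) *
            (v j - if j = o then ∑ k, v k else 0) * D i j
            = ∑ i, ∑ j, v i * v j * D i j - (∑ k, v k) * ∑ i, v i * D i o
              - (∑ k, v k) * ∑ j, v j * D o j := by
          generalize ∑ k, v k = S
          simp only [sub_mul, mul_sub, Finset.sum_sub_distrib, ite_mul, mul_ite, zero_mul,
            mul_zero, Finset.sum_ite_eq', Finset.sum_ite_irrel, Finset.mem_univ, if_true,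
            Finset.sum_const_zero, hdiag, Finset.mul_sum]
          simp only [mul_assoc, mul_left_comm, sub_zero]
          ring
        have r : star v ⬝ᵥ P *ᵥ v = ((∑ i, v i * D i o) * (∑ k, v k)
              + (∑ k, v k) * (∑ j, v j * D o j) - ∑ i, ∑ j, v i * v j * D i j) / 2 := by
          rw [Finset.sum_mul_sum, Finset.sum_mul_sum]
          simp only [dotProduct, mulVec, star_trivial, Finset.mul_sum, P, Matrix.of_apply,
            ← Finset.sum_add_distrib, ← Finset.sum_sub_distrib, Finset.sum_div]
          refine Finset.sum_congr rfl fun i _ => Finset.sum_congr rfl fun j _ => ?_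
          ring
        rw [l, r]
        ring
      rw [e] at h
      linarith
  obtain ⟨n, A, hA⟩ := Matrix.posSemidef_iff_eq_sum_vecMulVec.mp hP
  have hA' : ∀ i j, ∑ k, A k i * A k j = (D i o + D o j - D i j) / 2 := fun i j => by
    have := congrFun (congrFun hA i) j
    simpa [P, Matrix.sum_apply, vecMulVec_apply] using this.symm
  refine ⟨n, fun i => WithLp.toLp 2 fun k => A k i, fun i j => ?_⟩
  rw [EuclideanSpace.dist_eq, Real.sq_sqrt (by positivity)]
  have : ∑ k, dist (A k i) (A k j) ^ 2
      = ∑ k, A k i * A k i + ∑ k, A k j * A k j - 2 * ∑ k, A k i * A k j := by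
    simp only [Finset.mul_sum, ← Finset.sum_add_distrib, ← Finset.sum_sub_distrib]
    refine Finset.sum_congr rfl fun k _ => ?_
    rw [Real.dist_eq, sq_abs]
    ring
  refine this.trans ?_
  rw [hA', hA', hA', hdiag, hdiag, hsymm o i, hsymm o j]
  ring

theorem power_transform_euclidean (m : ℕ) (d : Fin m → Fin m → ℝ)
    (h_symm : ∀ i j, d i j = d j i) (h_diag : ∀ i, d i i = 0)
    (h_nonneg : ∀ i j, 0 ≤ d i j)
    (h_tri : ∀ i j k, d i j ≤ d i k + d k j)
    (n : ℕ) (y : Fin m → EuclideanSpace ℝ (Fin n))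
    (hy : ∀ i j, dist (y i) (y j) = d i j)
    (c : ℝ) (hc0 : 0 < c) (hc1 : c ≤ 1) :
    ∃ n' : ℕ, ∃ z : Fin m → EuclideanSpace ℝ (Fin n'),
      ∀ i j, dist (z i) (z j) = (d i j) ^ c := by
  rcases hc1.eq_or_lt with rfl | hc1
  · exact ⟨n, y, fun i j => by rw [hy, Real.rpow_one]⟩
  rcases m with _ | m
  · exact ⟨0, fun i => i.elim0, fun i => i.elim0⟩
  obtain ⟨n', z, hz⟩ := exists_sq_dist_eq_of_conditionally_nonpos (0 : Fin (m + 1))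
    (fun i j => (dist (y i) (y j) ^ 2) ^ c) (fun i j => by rw [dist_comm])
    (fun i => by simp [Real.zero_rpow hc0.ne'])
    (fun w hw => sum_mul_sq_dist_rpow_nonpos y c ⟨hc0, hc1⟩ w hw)
  refine ⟨n', z, fun i j => ?_⟩
  have h := hz i j
  rw [hy, ← Real.rpow_pow_comm (h_nonneg i j)] at h
  exact (pow_left_inj₀ dist_nonneg (Real.rpow_nonneg (h_nonneg i j) c) two_ne_zero).1 h
end

section
/- Let x : Fin m → EuclideanSpace ℝ (Fin n) be any finite family of points in Euclidean space. Then the induced metric is of negative type: for every η : Fin m → ℝ with ∑ i, η i = 0 one has ∑_{i,j} η i · η j · dist (x i) (x j) ≤ 0. (Euclidean metric spaces are of negative type.) -/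
/-!
Let `g` be a standard Gaussian vector. For every `v`, the variable `⟪v, g⟫` is a centred Gaussian of
variance `‖v‖ ^ 2`, so `𝔼 |⟪v, g⟫| = c * ‖v‖` with `c = 𝔼 |Z| > 0`, `Z` standard normal
(`integral_abs_inner_stdGaussian`, `integral_abs_gaussianReal_pos`). Hence
`c * dist (x i) (x j) = 𝔼 |⟪x i, g⟫ - ⟪x j, g⟫|`, which exhibits the Euclidean distance as an
average of pullbacks of the distance on the line, and it suffices to treat the line.

On the line, `|s - t| = s + t - 2 * min s t`. The terms `s` and `t` contribute nothing because the
weights sum to zero, and `min s t` is, up to a constant, the inner product in `L²` of the indicators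
of `(a, s]` and `(a, t]`, where `a` is a common lower bound; it is therefore a positive semidefinite
kernel (`real_negative_type`).
-/

open MeasureTheory ProbabilityTheory
open scoped RealInnerProductSpace

/-- The real line is of negative type. -/
lemma real_negative_type {m : ℕ} (s η : Fin m → ℝ) (hη : ∑ i, η i = 0) :
    ∑ i, ∑ j, η i * η j * |s i - s j| ≤ 0 := by
  obtain ⟨a, ha⟩ : ∃ a, ∀ i, a ≤ s i := by
    refine ⟨-∑ i, |s i|, fun i ↦ ?_⟩
    have := Finset.single_le_sum (f := fun i ↦ |s i|) (fun j _ ↦ abs_nonneg _) (Finset.mem_univ i)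
    linarith [neg_abs_le (s i)]
  let f : Fin m → ℝ → ℝ := fun i ↦ (Set.Ioc a (s i)).indicator 1
  have hff (i j) : (fun u ↦ f i u * f j u) = (Set.Ioc a (min (s i) (s j))).indicator 1 := by
    ext u
    have h : Set.Ioc a (min (s i) (s j)) = Set.Ioc a (s i) ∩ Set.Ioc a (s j) := by
      ext; simp; tauto
    rw [h, Set.inter_indicator_one, Pi.mul_apply]
  have hmin (i j) : ∫ u, f i u * f j u = min (s i) (s j) - a := by
    rw [hff, integral_indicator_one measurableSet_Ioc, Real.volume_real_Ioc_of_le]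
    exact le_min (ha i) (ha j)
  have hint (i j) : Integrable (fun u ↦ f i u * f j u) := by
    rw [hff, integrable_indicator_iff measurableSet_Ioc]
    exact integrableOn_const (by simp)
  have hpsd : ∑ i, ∑ j, η i * η j * (min (s i) (s j) - a) = ∫ u, (∑ i, η i * f i u) ^ 2 := by
    have h (u : ℝ) : (∑ i, η i * f i u) ^ 2 = ∑ i, ∑ j, η i * η j * (f i u * f j u) := by
      rw [sq, Finset.sum_mul_sum]
      exact Finset.sum_congr rfl fun i _ ↦ Finset.sum_congr rfl fun j _ ↦ by ring
    simp_rw [h]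
    rw [integral_finsetSum _ fun i _ ↦ integrable_finsetSum _ fun j _ ↦ (hint i j).const_mul _]
    refine Finset.sum_congr rfl fun i _ ↦ ?_
    rw [integral_finsetSum _ fun j _ ↦ (hint i j).const_mul _]
    exact Finset.sum_congr rfl fun j _ ↦ by rw [integral_const_mul, hmin]
  have habs (i j) : η i * η j * |s i - s j| =
      η i * (s i - a) * η j + η i * (η j * (s j - a)) - 2 * (η i * η j * (min (s i) (s j) - a)) := by
    rcases le_total (s i) (s j) with h | h
    · rw [min_eq_left h, abs_of_nonpos (by linarith)]; ring
    · rw [min_eq_right h, abs_of_nonneg (by linarith)]; ring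
  simp_rw [habs, Finset.sum_sub_distrib, Finset.sum_add_distrib, ← Finset.mul_sum,
    ← Finset.sum_mul, hη, hpsd]
  have : 0 ≤ ∫ u, (∑ i, η i * f i u) ^ 2 := integral_nonneg fun u ↦ sq_nonneg _
  linarith

lemma integrable_abs_gaussianReal : Integrable (fun y ↦ |y|) (gaussianReal 0 1) :=
  ((memLp_id_gaussianReal (μ := 0) (v := 1) 1).integrable (by simp)).abs

lemma integral_abs_gaussianReal_pos : 0 < ∫ y, |y| ∂(gaussianReal 0 1) := by
  rw [integral_pos_iff_support_of_nonneg (fun y ↦ abs_nonneg y) integrable_abs_gaussianReal]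
  have : Function.support (fun y : ℝ ↦ |y|) = {0}ᶜ := by ext; simp
  have := nullSingletonClass_gaussianReal (μ := 0) (v := 1) one_ne_zero
  simp [*, prob_compl_eq_one_sub]

/-- The mean of `|⟪v, g⟫|` over a standard Gaussian vector `g` is a fixed multiple of `‖v‖`. -/
lemma integral_abs_inner_stdGaussian {n : ℕ} (v : EuclideanSpace ℝ (Fin n)) :
    ∫ g, |⟪v, g⟫| ∂(stdGaussian (EuclideanSpace ℝ (Fin n))) =
      ‖v‖ * ∫ y, |y| ∂(gaussianReal 0 1) := by
  have hmap : (stdGaussian (EuclideanSpace ℝ (Fin n))).map (innerSL ℝ v) =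
      (gaussianReal 0 1).map (‖v‖ * ·) := by
    rw [IsGaussian.map_eq_gaussianReal, integral_strongDual_stdGaussian,
      variance_dual_stdGaussian, innerSL_apply_norm, gaussianReal_map_const_mul]
    congr 1
    · simp
    · ext; simp
  calc ∫ g, |⟪v, g⟫| ∂(stdGaussian (EuclideanSpace ℝ (Fin n)))
      = ∫ y, |y| ∂((stdGaussian (EuclideanSpace ℝ (Fin n))).map (innerSL ℝ v)) := by
        rw [integral_map (by fun_prop) (by fun_prop)]; simp
    _ = ‖v‖ * ∫ y, |y| ∂(gaussianReal 0 1) := by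
        rw [hmap, integral_map (by fun_prop) (by fun_prop), ← integral_const_mul]
        simp [abs_mul]

theorem euclidean_negative_type (m n : ℕ) (x : Fin m → EuclideanSpace ℝ (Fin n))
    (η : Fin m → ℝ) (hη : ∑ i, η i = 0) :
    ∑ i, ∑ j, η i * η j * dist (x i) (x j) ≤ 0 := by
  let γ := stdGaussian (EuclideanSpace ℝ (Fin n))
  set c := ∫ y, |y| ∂(gaussianReal 0 1)
  have hint (i j) : Integrable (fun g ↦ η i * η j * |⟪x i - x j, g⟫|) γ :=
    ((innerSL ℝ (x i - x j)).integrable_comp IsGaussian.integrable_id).abs.const_mul _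
  have havg : c * ∑ i, ∑ j, η i * η j * dist (x i) (x j) =
      ∫ g, ∑ i, ∑ j, η i * η j * |⟪x i - x j, g⟫| ∂γ := by
    rw [integral_finsetSum _ fun i _ ↦ integrable_finsetSum _ fun j _ ↦ hint i j, Finset.mul_sum]
    refine Finset.sum_congr rfl fun i _ ↦ ?_
    rw [integral_finsetSum _ fun j _ ↦ hint i j, Finset.mul_sum]
    refine Finset.sum_congr rfl fun j _ ↦ ?_
    rw [integral_const_mul, integral_abs_inner_stdGaussian, dist_eq_norm]
    ring
  have hle : ∫ g, ∑ i, ∑ j, η i * η j * |⟪x i - x j, g⟫| ∂γ ≤ 0 := by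
    refine integral_nonpos fun g ↦ ?_
    simp only [inner_sub_left]
    exact real_negative_type (fun i ↦ ⟪x i, g⟫) η hη
  exact nonpos_of_mul_nonpos_right (havg.trans_le hle) integral_abs_gaussianReal_pos
end

section
/- Let d : Fin 4 → Fin 4 → ℝ be a distance matrix. Then d is of negative type: for every v : Fin 4 → ℝ with ∑ i, v i = 0 one has ∑_{i,j} v i · v j · d i j ≤ 0. (Every metric space with at most 4 points is of negative type.) -/
/-!
Since `d` is symmetric with zero diagonal, the quadratic form is twice the sum over pairs, so it is
enough to bound that sum by `0`. Replacing `v` by `-v`, either one weight is `≥ 0` and three are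
`≤ 0`, or the signs split two against two.

* One against three (`pairSum_nonpos_of_one_three`): bound each distance between two negative
  points by the path through the positive point.
* Two against two, with weights `a, b ≥ 0` at `x, y` and `-c, -e ≤ 0` at `z, w`, so `a + b = c + e`:
  up to symmetry `b` is the smallest of the four (`pairSum_nonpos_of_min`). The distances `d x y` and
  `d z w` are then routed through the other pair. Of the total weight `c * e` on `d z w`, the part
  `b ^ 2 / 2` goes through `y` and the rest through `x`. Of the weight `a * b` on `d x y`, the part
  `b * (2 * c - b) / 2` goes through `z` and the part `b * (2 * e - b) / 2` through `w`.
  This uses exactly the available weight on `d y z` and `d y w`, and leaves the nonnegative surpluses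
  `(c - b) ^ 2` on `d x z` and `(e - b) ^ 2` on `d x w`.
-/

/-- Half of the quadratic form of `d`, written as a sum over the six pairs of points. -/
def pairSum (d : Fin 4 → Fin 4 → ℝ) (v : Fin 4 → ℝ) (x y z w : Fin 4) : ℝ :=
  v x * v y * d x y + v z * v w * d z w + v x * v z * d x z + v x * v w * d x w
    + v y * v z * d y z + v y * v w * d y w

theorem pairSum_nonpos_of_one_three (d : Fin 4 → Fin 4 → ℝ)
    (h_symm : ∀ i j, d i j = d j i) (h_nonneg : ∀ i j, 0 ≤ d i j)
    (h_tri : ∀ i j k, d i j ≤ d i k + d k j) (v : Fin 4 → ℝ) (x y z w : Fin 4)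
    (hv : v x + v y + v z + v w = 0) (hy : v y ≤ 0) (hz : v z ≤ 0) (hw : v w ≤ 0) :
    pairSum d v x y z w ≤ 0 := by
  have hx : v x = -(v y + v z + v w) := by linarith
  have t1 := h_tri y z x
  have t2 := h_tri y w x
  have t3 := h_tri z w x
  rw [h_symm y x] at t1 t2
  rw [h_symm z x] at t3
  have e1 := mul_le_mul_of_nonneg_left t1 (mul_nonneg_of_nonpos_of_nonpos hy hz)
  have e2 := mul_le_mul_of_nonneg_left t2 (mul_nonneg_of_nonpos_of_nonpos hy hw)
  have e3 := mul_le_mul_of_nonneg_left t3 (mul_nonneg_of_nonpos_of_nonpos hz hw)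
  have p1 := mul_nonneg (sq_nonneg (v y)) (h_nonneg x y)
  have p2 := mul_nonneg (sq_nonneg (v z)) (h_nonneg x z)
  have p3 := mul_nonneg (sq_nonneg (v w)) (h_nonneg x w)
  rw [pairSum, hx]
  linarith

/-- The two-against-two case when the weight at `y` is the smallest in absolute value. -/
theorem pairSum_nonpos_of_min (d : Fin 4 → Fin 4 → ℝ)
    (h_symm : ∀ i j, d i j = d j i) (h_nonneg : ∀ i j, 0 ≤ d i j)
    (h_tri : ∀ i j k, d i j ≤ d i k + d k j) (v : Fin 4 → ℝ) (x y z w : Fin 4)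
    (hv : v x + v y + v z + v w = 0) (hy : 0 ≤ v y) (hz : v y ≤ -v z) (hw : v y ≤ -v w) :
    pairSum d v x y z w ≤ 0 := by
  obtain ⟨b, hb⟩ : ∃ b, b = v y := ⟨_, rfl⟩
  obtain ⟨c, hc⟩ : ∃ c, c = -v z := ⟨_, rfl⟩
  obtain ⟨e, he⟩ : ∃ e, e = -v w := ⟨_, rfl⟩
  have hx : v x = c + e - b := by linarith
  have hz' : v z = -c := by linarith
  have hw' : v w = -e := by linarith
  rw [← hb] at hy hz hw
  rw [← hc] at hz
  rw [← he] at hw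
  have t1 := h_tri z w x
  have t2 := h_tri z w y
  have t3 := h_tri x y z
  have t4 := h_tri x y w
  rw [h_symm z x] at t1
  rw [h_symm z y] at t2 t3
  rw [h_symm w y] at t4
  have e1 := mul_le_mul_of_nonneg_left t1 (show 0 ≤ c * e - b ^ 2 / 2 by nlinarith)
  have e2 := mul_le_mul_of_nonneg_left t2 (show 0 ≤ b ^ 2 / 2 by positivity)
  have e3 := mul_le_mul_of_nonneg_left t3
    (show 0 ≤ b * (2 * c - b) / 2 from
      div_nonneg (mul_nonneg hy (by linarith)) (by norm_num))
  have e4 := mul_le_mul_of_nonneg_left t4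
    (show 0 ≤ b * (2 * e - b) / 2 from
      div_nonneg (mul_nonneg hy (by linarith)) (by norm_num))
  -- The weights left over on `d x z` and `d x w`.
  have p1 := mul_nonneg (sq_nonneg (c - b)) (h_nonneg x z)
  have p2 := mul_nonneg (sq_nonneg (e - b)) (h_nonneg x w)
  rw [pairSum, hx, hz', hw', ← hb]
  linarith

theorem pairSum_neg (d : Fin 4 → Fin 4 → ℝ) (v : Fin 4 → ℝ) (x y z w : Fin 4) :
    pairSum d (-v) x y z w = pairSum d v x y z w := by
  simp [pairSum]

theorem pairSum_nonpos_of_two_two (d : Fin 4 → Fin 4 → ℝ)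
    (h_symm : ∀ i j, d i j = d j i) (h_nonneg : ∀ i j, 0 ≤ d i j)
    (h_tri : ∀ i j k, d i j ≤ d i k + d k j) (v : Fin 4 → ℝ) (x y z w : Fin 4)
    (hv : v x + v y + v z + v w = 0)
    (hx : 0 ≤ v x) (hy : 0 ≤ v y) (hz : v z ≤ 0) (hw : v w ≤ 0) :
    pairSum d v x y z w ≤ 0 := by
  have key := pairSum_nonpos_of_min d h_symm h_nonneg h_tri
  have swap : ∀ u, pairSum d u y x z w = pairSum d u x y z w := fun u => by
    simp only [pairSum, h_symm y x]; ring
  have flip : ∀ u, pairSum d u z w x y = pairSum d u x y z w := fun u => by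
    simp only [pairSum, h_symm z x, h_symm z y, h_symm w x, h_symm w y]; ring
  have flip' : ∀ u, pairSum d u w z x y = pairSum d u x y z w := fun u => by
    simp only [pairSum, h_symm w z, h_symm z x, h_symm z y, h_symm w x, h_symm w y]; ring
  rcases le_total (v y) (-v z) with h1 | h1 <;> rcases le_total (v y) (-v w) with h2 | h2
  · exact key v x y z w hv hy h1 h2
  · -- Here `-v w ≤ v y ≤ -v z`, so the smallest weight is at `w`, since `v x + v w = -v z - v y`.
    rw [← pairSum_neg, ← flip]
    apply key <;> simp only [Pi.neg_apply] <;> linarith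
  · rw [← pairSum_neg, ← flip']
    apply key <;> simp only [Pi.neg_apply] <;> linarith
  · rw [← swap]
    exact key v y x z w (by linarith) hx (by linarith) (by linarith)

theorem four_point_negative_type (d : Fin 4 → Fin 4 → ℝ)
    (h_symm : ∀ i j, d i j = d j i) (h_diag : ∀ i, d i i = 0)
    (h_nonneg : ∀ i j, 0 ≤ d i j)
    (h_tri : ∀ i j k, d i j ≤ d i k + d k j)
    (v : Fin 4 → ℝ) (hv : ∑ i, v i = 0) :
    ∑ i, ∑ j, v i * v j * d i j ≤ 0 := by
  have main : ∑ i, ∑ j, v i * v j * d i j = 2 * pairSum d v 0 1 2 3 := by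
    simp only [Fin.sum_univ_four, pairSum, h_diag, h_symm 1 0, h_symm 2 0, h_symm 3 0,
      h_symm 2 1, h_symm 3 1, h_symm 3 2]
    ring
  rw [Fin.sum_univ_four] at hv
  rw [main]
  suffices h : pairSum d v 0 1 2 3 ≤ 0 by linarith
  -- By `v ↦ -v`, the weight at `0` may be taken nonnegative.
  suffices H : ∀ u : Fin 4 → ℝ, u 0 + u 1 + u 2 + u 3 = 0 → 0 ≤ u 0 →
      pairSum d u 0 1 2 3 ≤ 0 by
    rcases le_total 0 (v 0) with h0 | h0
    · exact H v hv h0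
    · rw [← pairSum_neg]
      apply H <;> simp only [Pi.neg_apply] <;> linarith
  clear main hv v
  intro v hv h0
  have one := pairSum_nonpos_of_one_three d h_symm h_nonneg h_tri
  have two := pairSum_nonpos_of_two_two d h_symm h_nonneg h_tri
  have p1 : pairSum d v 1 0 2 3 = pairSum d v 0 1 2 3 := by
    simp only [pairSum, h_symm 1 0]; ring
  have p2 : pairSum d v 0 2 1 3 = pairSum d v 0 1 2 3 := by
    simp only [pairSum, h_symm 2 1]; ring
  have p3 : pairSum d v 0 3 1 2 = pairSum d v 0 1 2 3 := by
    simp only [pairSum, h_symm 3 1, h_symm 3 2]; ring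
  have n1 : pairSum d (-v) 1 0 2 3 = pairSum d v 0 1 2 3 := by rw [pairSum_neg, p1]
  have n2 : pairSum d (-v) 2 0 1 3 = pairSum d v 0 1 2 3 := by
    rw [pairSum_neg]; simp only [pairSum, h_symm 2 0, h_symm 2 1]; ring
  have n3 : pairSum d (-v) 3 0 1 2 = pairSum d v 0 1 2 3 := by
    rw [pairSum_neg]; simp only [pairSum, h_symm 3 0, h_symm 3 1, h_symm 3 2]; ring
  rcases le_total 0 (v 1) with h1 | h1 <;> rcases le_total 0 (v 2) with h2 | h2 <;>
    rcases le_total 0 (v 3) with h3 | h3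
  -- If no weight is negative, `-v` at `0, 1, 2` is still `≤ 0`, which is all `one` needs.
  · rw [← n3]
    apply one <;> simp only [Pi.neg_apply] <;> linarith
  · rw [← n3]
    apply one <;> simp only [Pi.neg_apply] <;> linarith
  · rw [← n2]
    apply one <;> simp only [Pi.neg_apply] <;> linarith
  · exact two v 0 1 2 3 hv h0 h1 h2 h3
  · rw [← n1]
    apply one <;> simp only [Pi.neg_apply] <;> linarith
  · rw [← p2]
    exact two v 0 2 1 3 (by linarith) h0 h2 h1 h3
  · rw [← p3]
    exact two v 0 3 1 2 (by linarith) h0 h3 h1 h2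
  · exact one v 0 1 2 3 hv h1 h2 h3
end

section
/- Let f, g : Fin 4 → Fin 4 → ℝ be distance matrices. Then for every doubly stochastic matrix P : Fin 4 → Fin 4 → ℝ there exists a permutation σ of Fin 4 such that ∑_{i,j} (f i j − g (σ i) (σ j))² ≤ ∑_{i,j,k,l} (f i j − g k l)² · P i k · P j l. (For metric spaces with n ≤ 4 points, the embedding of the n-point metric spaces into the space of spaces is isometric: the infimum of the L²-distortion over transport plans is attained on transport maps.) -/
/-!
Every metric on four points is a nonnegative combination of cut semimetrics, i.e. embeds
isometrically in `ℓ¹` (`exists_weighted_cuts`), hence is of negative type: `∑ g k l * y k * y l ≤ 0`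
whenever `∑ y k = 0` (`negative_type`). Substituting the cut decomposition of `f` into the distortion
`J P = ∑ (f i j - g k l)² * P i k * P j l`, evaluated at a matrix `D` with vanishing row and column
sums, writes `J D` as a nonnegative combination of values of the quadratic form of `g` at vectors of
sum zero, so `J D ≤ 0` (`distortion_nonpos`). Since differences of doubly stochastic matrices are of
this kind, `J` is concave on the Birkhoff polytope, and a concave function on a polytope is bounded
below by its value at some vertex. By Birkhoff's theorem the vertices are permutation matrices.
-/

/-- `f i j` is a nonnegative combination of the squared differences `(φ a i - φ a j)²`. For `φ a` the
indicator of a set, these are cut semimetrics. -/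
def WeightedCuts (f : Fin 4 → Fin 4 → ℝ) : Prop :=
  ∃ (w : Fin 6 → ℝ) (φ : Fin 6 → Fin 4 → ℝ), (∀ a, 0 ≤ w a) ∧
    ∀ i j, f i j = ∑ a, w a * (φ a i - φ a j) ^ 2

/-- The case where the pairing `01|23` has the largest sum. The weights are the lengths of the four
antennas and of the two sides of the rectangle in the tight span of the metric. -/
lemma weightedCuts_of_max (f : Fin 4 → Fin 4 → ℝ)
    (hs : ∀ i j, f i j = f j i) (hd : ∀ i, f i i = 0)
    (ht : ∀ i j k, f i j ≤ f i k + f k j)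
    (h1 : f 0 2 + f 1 3 ≤ f 0 1 + f 2 3) (h2 : f 0 3 + f 1 2 ≤ f 0 1 + f 2 3) :
    WeightedCuts f := by
  refine ⟨![(f 0 2 + f 0 3 - f 2 3) / 2, (f 1 2 + f 1 3 - f 2 3) / 2,
      (f 0 2 + f 1 2 - f 0 1) / 2, (f 0 3 + f 1 3 - f 0 1) / 2,
      (f 0 1 + f 2 3 - f 0 2 - f 1 3) / 2, (f 0 1 + f 2 3 - f 0 3 - f 1 2) / 2],
    ![![1, 0, 0, 0], ![0, 1, 0, 0], ![0, 0, 1, 0], ![0, 0, 0, 1], ![1, 0, 1, 0], ![1, 0, 0, 1]],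
    ?_, ?_⟩
  · have t0 := ht 2 3 0
    have t1 := ht 2 3 1
    have t2 := ht 0 1 2
    have t3 := ht 0 1 3
    rw [hs 2 0] at t0
    rw [hs 2 1] at t1
    rw [hs 2 1] at t2
    rw [hs 3 1] at t3
    intro a
    fin_cases a <;> simp <;> linarith
  · intro i j
    have e10 := hs 1 0
    have e20 := hs 2 0
    have e30 := hs 3 0
    have e21 := hs 2 1
    have e31 := hs 3 1
    have e32 := hs 3 2
    fin_cases i <;> fin_cases j <;> simp [Fin.sum_univ_six, hd] <;> linarith

lemma WeightedCuts.of_relabel {f : Fin 4 → Fin 4 → ℝ} (τ : Equiv.Perm (Fin 4))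
    (h : WeightedCuts fun i j => f (τ i) (τ j)) : WeightedCuts f := by
  obtain ⟨w, φ, hw, h⟩ := h
  refine ⟨w, fun a i => φ a (τ.symm i), hw, fun i j => ?_⟩
  simpa using h (τ.symm i) (τ.symm j)

/-- Every four-point metric is a nonnegative combination of cut semimetrics. -/
lemma exists_weighted_cuts (f : Fin 4 → Fin 4 → ℝ)
    (hs : ∀ i j, f i j = f j i) (hd : ∀ i, f i i = 0)
    (ht : ∀ i j k, f i j ≤ f i k + f k j) : WeightedCuts f := by
  have key (τ : Equiv.Perm (Fin 4))
      (h1 : f (τ 0) (τ 2) + f (τ 1) (τ 3) ≤ f (τ 0) (τ 1) + f (τ 2) (τ 3))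
      (h2 : f (τ 0) (τ 3) + f (τ 1) (τ 2) ≤ f (τ 0) (τ 1) + f (τ 2) (τ 3)) : WeightedCuts f :=
    .of_relabel τ (weightedCuts_of_max _ (fun _ _ => hs _ _) (fun _ => hd _)
      (fun _ _ _ => ht _ _ _) h1 h2)
  have s12 : (Equiv.swap (1 : Fin 4) 2) 0 = 0 ∧ (Equiv.swap (1 : Fin 4) 2) 1 = 2 ∧
      (Equiv.swap (1 : Fin 4) 2) 2 = 1 ∧ (Equiv.swap (1 : Fin 4) 2) 3 = 3 := by decide
  have s13 : (Equiv.swap (1 : Fin 4) 3) 0 = 0 ∧ (Equiv.swap (1 : Fin 4) 3) 1 = 3 ∧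
      (Equiv.swap (1 : Fin 4) 3) 2 = 2 ∧ (Equiv.swap (1 : Fin 4) 3) 3 = 1 := by decide
  have k0 := key 1
  have k1 := key (Equiv.swap 1 2)
  have k2 := key (Equiv.swap 1 3)
  simp only [Equiv.Perm.one_apply] at k0
  rw [s12.1, s12.2.1, s12.2.2.1, s12.2.2.2, hs 2 1] at k1
  rw [s13.1, s13.2.1, s13.2.2.1, s13.2.2.2, hs 2 1, hs 3 1, hs 3 2] at k2
  by_cases h1 : f 0 2 + f 1 3 ≤ f 0 1 + f 2 3
  · by_cases h2 : f 0 3 + f 1 2 ≤ f 0 1 + f 2 3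
    · exact k0 h1 h2
    · exact k2 (by linarith) (by linarith)
  · by_cases h2 : f 0 3 + f 1 2 ≤ f 0 2 + f 1 3
    · exact k1 (by linarith) (by linarith)
    · exact k2 (by linarith) (by linarith)

lemma negative_type {g : Fin 4 → Fin 4 → ℝ} (hg : WeightedCuts g) (y : Fin 4 → ℝ)
    (hy : ∑ k, y k = 0) : ∑ k, ∑ l, g k l * (y k * y l) ≤ 0 := by
  obtain ⟨w, φ, hw, h⟩ := hg
  have e : ∑ k, ∑ l, g k l * (y k * y l) = -2 * ∑ a, w a * (∑ k, φ a k * y k) ^ 2 := by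
    have e1 (a : Fin 6) : ∑ k, ∑ l, (φ a k - φ a l) ^ 2 * (y k * y l)
        = -2 * (∑ k, φ a k * y k) ^ 2 := by
      simp only [Fin.sum_univ_four] at hy ⊢
      have hy3 : y 3 = -(y 0 + y 1 + y 2) := by linarith
      rw [hy3]; ring
    calc _ = ∑ k, ∑ l, ∑ a, w a * ((φ a k - φ a l) ^ 2 * (y k * y l)) := by
          simp only [h, Finset.sum_mul, mul_assoc]
      _ = ∑ a, ∑ k, ∑ l, w a * ((φ a k - φ a l) ^ 2 * (y k * y l)) := by
          rw [Finset.sum_comm_cycle]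
      _ = ∑ a, w a * (-2 * (∑ k, φ a k * y k) ^ 2) := by
          simp only [← Finset.mul_sum, e1]
      _ = _ := by
          rw [Finset.mul_sum]; exact Finset.sum_congr rfl fun a _ => by ring
  rw [e]
  have := Finset.sum_nonneg fun a (_ : a ∈ Finset.univ) =>
    mul_nonneg (hw a) (sq_nonneg (∑ k, φ a k * y k))
  linarith

/-- The `L²`-distortion of a matrix `P` viewed as a coupling, as a quadratic form in `P`. -/
def distortion (f g : Fin 4 → Fin 4 → ℝ) (P : Matrix (Fin 4) (Fin 4) ℝ) : ℝ :=
  ∑ i, ∑ j, ∑ k, ∑ l, (f i j - g k l) ^ 2 * P i k * P j l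

/-- On matrices with vanishing row and column sums the squares `f²` and `g²` do not contribute. -/
lemma distortion_eq_cross (f g : Fin 4 → Fin 4 → ℝ) (D : Matrix (Fin 4) (Fin 4) ℝ)
    (hr : ∀ i, ∑ k, D i k = 0) (hc : ∀ k, ∑ i, D i k = 0) :
    distortion f g D = -2 * ∑ k, ∑ l, g k l * ∑ i, ∑ j, f i j * (D i k * D j l) := by
  have h1 : ∑ i, ∑ j, ∑ k, ∑ l, f i j ^ 2 * D i k * D j l = 0 := by
    simp only [← Finset.mul_sum, hr, mul_zero, Finset.sum_const_zero]
  have h2 : ∑ i, ∑ j, ∑ k, ∑ l, g k l ^ 2 * D i k * D j l = 0 := by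
    refine Finset.sum_eq_zero fun i _ => ?_
    rw [Finset.sum_comm]
    refine Finset.sum_eq_zero fun k _ => ?_
    rw [Finset.sum_comm]
    simp only [← Finset.mul_sum, hc, mul_zero, Finset.sum_const_zero]
  have h3 : ∑ i, ∑ j, ∑ k, ∑ l, g k l * (f i j * (D i k * D j l)) =
      ∑ k, ∑ l, g k l * ∑ i, ∑ j, f i j * (D i k * D j l) := by
    simp only [Finset.mul_sum]
    rw [Finset.sum_comm_cycle]
    refine Finset.sum_congr rfl fun k _ => ?_
    rw [Finset.sum_comm_cycle]
  rw [← h3]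
  calc distortion f g D = ∑ i, ∑ j, ∑ k, ∑ l, (f i j ^ 2 * D i k * D j l
        + g k l ^ 2 * D i k * D j l + -2 * (g k l * (f i j * (D i k * D j l)))) := by
        unfold distortion
        refine Finset.sum_congr rfl fun i _ => Finset.sum_congr rfl fun j _ =>
          Finset.sum_congr rfl fun k _ => Finset.sum_congr rfl fun l _ => by ring
    _ = _ := by
        simp only [Finset.sum_add_distrib, h1, h2, zero_add]
        simp only [← Finset.mul_sum]

lemma distortion_nonpos_s19 {f g : Fin 4 → Fin 4 → ℝ} (hf : WeightedCuts f) (hg : WeightedCuts g)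
    (D : Matrix (Fin 4) (Fin 4) ℝ)
    (hr : ∀ i, ∑ k, D i k = 0) (hc : ∀ k, ∑ i, D i k = 0) : distortion f g D ≤ 0 := by
  obtain ⟨w, φ, hw, h⟩ := hf
  -- Contracting the cut decomposition of `f` with `D` yields vectors `y a` of sum zero.
  set y : Fin 6 → Fin 4 → ℝ := fun a k => ∑ i, φ a i * D i k with hy
  have hy0 (a : Fin 6) : ∑ k, y a k = 0 := by
    simp only [hy]
    rw [Finset.sum_comm]
    simp only [← Finset.mul_sum, hr, mul_zero, Finset.sum_const_zero]
  have e1 (a : Fin 6) (k l : Fin 4) : ∑ i, ∑ j, (φ a i - φ a j) ^ 2 * (D i k * D j l)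
      = -2 * (y a k * y a l) := by
    have hk := hc k
    have hl := hc l
    simp only [hy, Fin.sum_univ_four] at hk hl ⊢
    have hk3 : D 3 k = -(D 0 k + D 1 k + D 2 k) := by linarith
    have hl3 : D 3 l = -(D 0 l + D 1 l + D 2 l) := by linarith
    rw [hk3, hl3]; ring
  have e2 (k l : Fin 4) : ∑ i, ∑ j, f i j * (D i k * D j l)
      = ∑ a, w a * (-2 * (y a k * y a l)) := by
    simp only [h, Finset.sum_mul, mul_assoc]
    rw [Finset.sum_comm_cycle]
    simp only [← Finset.mul_sum, e1]
  have e3 : ∑ k, ∑ l, g k l * ∑ i, ∑ j, f i j * (D i k * D j l)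
      = -2 * ∑ a, w a * ∑ k, ∑ l, g k l * (y a k * y a l) := by
    simp only [e2, Finset.mul_sum]
    rw [Finset.sum_comm_cycle]
    refine Finset.sum_congr rfl fun a _ => Finset.sum_congr rfl fun k _ =>
      Finset.sum_congr rfl fun l _ => by ring
  rw [distortion_eq_cross f g D hr hc, e3]
  have := Finset.sum_nonpos fun a (_ : a ∈ Finset.univ) =>
    mul_nonpos_of_nonneg_of_nonpos (hw a) (negative_type hg (y a) (hy0 a))
  linarith

/-- A quadratic form deviates from affinity along a segment by its value on the direction. -/
lemma distortion_segment (f g : Fin 4 → Fin 4 → ℝ) (P Q : Matrix (Fin 4) (Fin 4) ℝ)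
    {a b : ℝ} (hab : a + b = 1) :
    a * distortion f g P + b * distortion f g Q =
      distortion f g (a • P + b • Q) + a * b * distortion f g (P - Q) := by
  obtain rfl : b = 1 - a := by linarith
  simp only [distortion, Finset.mul_sum, ← Finset.sum_add_distrib]
  refine Finset.sum_congr rfl fun i _ => Finset.sum_congr rfl fun j _ =>
    Finset.sum_congr rfl fun k _ => Finset.sum_congr rfl fun l _ => ?_
  simp only [Matrix.add_apply, Matrix.smul_apply, Matrix.sub_apply, smul_eq_mul]
  ring

lemma concaveOn_distortion {f g : Fin 4 → Fin 4 → ℝ} (hf : WeightedCuts f)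
    (hg : WeightedCuts g) :
    ConcaveOn ℝ (doublyStochastic ℝ (Fin 4) : Set (Matrix (Fin 4) (Fin 4) ℝ))
      (distortion f g) := by
  refine ⟨convex_doublyStochastic, fun P hP Q hQ a b ha hb hab => ?_⟩
  rw [SetLike.mem_coe, mem_doublyStochastic_iff_sum] at hP hQ
  have hD := distortion_nonpos_s19 hf hg (P - Q)
    (fun i => by simp [Finset.sum_sub_distrib, hP.2.1, hQ.2.1])
    (fun k => by simp [Finset.sum_sub_distrib, hP.2.2, hQ.2.2])
  have := mul_nonpos_of_nonneg_of_nonpos (mul_nonneg ha hb) hD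
  simp only [smul_eq_mul]
  linarith [distortion_segment f g P Q hab]

lemma distortion_permMatrix (f g : Fin 4 → Fin 4 → ℝ) (σ : Equiv.Perm (Fin 4)) :
    distortion f g (σ.permMatrix ℝ) = ∑ i, ∑ j, (f i j - g (σ i) (σ j)) ^ 2 := by
  simp [distortion, Equiv.Perm.permMatrix, PEquiv.toMatrix_apply]


theorem four_point_embedding_isometric (f g : Fin 4 → Fin 4 → ℝ)
    (hf_symm : ∀ i j, f i j = f j i) (hf_diag : ∀ i, f i i = 0)
    (hf_nonneg : ∀ i j, 0 ≤ f i j)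
    (hf_tri : ∀ i j k, f i j ≤ f i k + f k j)
    (hg_symm : ∀ i j, g i j = g j i) (hg_diag : ∀ i, g i i = 0)
    (hg_nonneg : ∀ i j, 0 ≤ g i j)
    (hg_tri : ∀ i j k, g i j ≤ g i k + g k j)
    (P : Fin 4 → Fin 4 → ℝ)
    (hP_nonneg : ∀ i j, 0 ≤ P i j)
    (hP_row : ∀ i, ∑ j, P i j = 1) (hP_col : ∀ j, ∑ i, P i j = 1) :
    ∃ σ : Equiv.Perm (Fin 4),
      ∑ i, ∑ j, (f i j - g (σ i) (σ j)) ^ 2 ≤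
        ∑ i, ∑ j, ∑ k, ∑ l, (f i j - g k l) ^ 2 * P i k * P j l := by
  have hPs : (P : Matrix (Fin 4) (Fin 4) ℝ) ∈
      convexHull ℝ {x : Matrix (Fin 4) (Fin 4) ℝ | ∃ σ : Equiv.Perm (Fin 4), σ.permMatrix ℝ = x} := by
    rw [← doublyStochastic_eq_convexHull_permMatrix]
    exact mem_doublyStochastic_iff_sum.2 ⟨hP_nonneg, hP_row, hP_col⟩
  have hconc := concaveOn_distortion (exists_weighted_cuts f hf_symm hf_diag hf_tri)
    (exists_weighted_cuts g hg_symm hg_diag hg_tri)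
  rw [doublyStochastic_eq_convexHull_permMatrix] at hconc
  obtain ⟨_, ⟨σ, rfl⟩, hσ⟩ := hconc.exists_le_of_mem_convexHull (subset_convexHull ℝ _) hPs
  exact ⟨σ, (distortion_permMatrix f g σ).symm.trans_le hσ⟩
end
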